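/- (Exterior limit of the normal derivative of the prolate spheroidal single layer potential.) Fix a > 0, u₀ > 1, and integers n ≥ 0, 0 ≤ m ≤ n. Let the density be σ(s,t) = Y_n^m(s,t)/√(u₀^2−s^2). Fix v ∈ (−1,1) and φ ∈ ℝ. Then the normal-direction derivative of the single layer potential, evaluated along the exterior normal approach, satisfies lim_{u→u₀⁺} [ (∂_uΦ(u,v,φ)/‖∂_uΦ(u,v,φ)‖) · (∇S[σ])(Φ(u,v,φ)) ] = ((n−m)!/(n+m)!)·(−1)^m·(u₀^2−1)·P_n^m(u₀)·(Q_n^m)′(u₀)·Y_n^m(v,φ)/√(u₀^2−v^2), where ∇ denotes the Euclidean gradient in ℝ^3 and · the Euclidean inner product. -/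

import Mathlib

noncomputable section

open Real MeasureTheory

/-- Legendre polynomial via Rodrigues' formula. -/
def legendreP (n : ℕ) (x : ℝ) : ℝ :=
  (1 / (2 ^ n * (n.factorial : ℝ))) * iteratedDeriv n (fun y : ℝ => (y ^ 2 - 1) ^ n) x

/-- Legendre function of the second kind (Neumann's integral), for `x > 1`. -/
def legendreQ (n : ℕ) (x : ℝ) : ℝ :=
  (1 / 2) * ∫ t in (-1 : ℝ)..1, legendreP n t / (x - t)

/-- Associated Legendre function of the first kind, off the cut (`x > 1`). -/
def assocP (n m : ℕ) (x : ℝ) : ℝ :=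
  Real.sqrt (x ^ 2 - 1) ^ m * iteratedDeriv m (legendreP n) x

/-- Associated Legendre function of the second kind, off the cut (`x > 1`). -/
def assocQ (n m : ℕ) (x : ℝ) : ℝ :=
  Real.sqrt (x ^ 2 - 1) ^ m * iteratedDeriv m (legendreQ n) x

/-- Ferrers function of the first kind, on the cut (`-1 ≤ v ≤ 1`). -/
def ferrersP (n m : ℕ) (v : ℝ) : ℝ :=
  Real.sqrt (1 - v ^ 2) ^ m * iteratedDeriv m (legendreP n) v

/-- Prolate spheroidal coordinate map. -/
def prolate (a u v φ : ℝ) : EuclideanSpace ℝ (Fin 3) :=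
  (WithLp.equiv 2 (Fin 3 → ℝ)).symm
    ![a * Real.sqrt (u ^ 2 - 1) * Real.sqrt (1 - v ^ 2) * Real.cos φ,
      a * Real.sqrt (u ^ 2 - 1) * Real.sqrt (1 - v ^ 2) * Real.sin φ,
      a * u * v]

/-- Surface spheroidal (= spherical) harmonic `Y_n^m(v, φ)`. -/
def sphY (n m : ℕ) (v φ : ℝ) : ℂ :=
  ((Real.sqrt ((2 * (n : ℝ) + 1) / (4 * Real.pi)) *
      Real.sqrt (((n - m).factorial : ℝ) / ((n + m).factorial : ℝ)) * ferrersP n m v : ℝ) : ℂ) *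
    Complex.exp (Complex.I * m * φ)

/-- Outward unit normal on the prolate spheroid `u = u₀`, at surface parameters `(s, t)`. -/
def unitNormalP (a u₀ s t : ℝ) : EuclideanSpace ℝ (Fin 3) :=
  ‖deriv (fun w => prolate a w s t) u₀‖⁻¹ • deriv (fun w => prolate a w s t) u₀

/-- Surface area element on the prolate spheroid `u = u₀`. -/
def areaElemP (a u₀ s : ℝ) : ℝ := a ^ 2 * Real.sqrt (u₀ ^ 2 - s ^ 2) * Real.sqrt (u₀ ^ 2 - 1)

/-- Laplace single layer potential on the prolate spheroid `u = u₀`. -/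
def singleLayerP (a u₀ : ℝ) (σ : ℝ → ℝ → ℂ) (x : EuclideanSpace ℝ (Fin 3)) : ℂ :=
  ∫ t in (0 : ℝ)..(2 * Real.pi), ∫ s in (-1 : ℝ)..1,
    ((areaElemP a u₀ s / (4 * Real.pi * ‖x - prolate a u₀ s t‖) : ℝ) : ℂ) * σ s t

/-! In spheroidal coordinates `(u, cos ψ, φ)` the inverse distance to the points of the spheroid
`u₀` is integrated against a multiple of `𝖯_n^m (cos θ) e^{imt}`. Jacobi's formula turns its
`m`-th Fourier coefficient in the azimuth into an integral of `sin t ^ (2 * m)` against the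
power `-m - 1 / 2` of the squared distance. Seen as a function of the elliptic coordinate `η` of
the source, with `cosh η = u₀`, the resulting integral over `θ` and `t` solves the Legendre
equation and is regular at `η = 0`, so it is a multiple of `P_n^{(m)} (cosh η)`. At `η = 0` the
spheroid collapses to the segment between its foci, and the same uniqueness argument in `ψ`
produces the factor `P_n^{(m)} (cos ψ)`. What is left is the value on the axis, `ψ = 0`, and
integrating it by parts `m` times gives Neumann's integral for `Q_n^{(m)} (u)`. Hence outside
the surface the potential is a constant times `P_n^m (u₀) Q_n^m (u) Y_n^m`, whose derivative
along the coordinate line of `u` is explicit and continuous up to `u₀`. -/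

open Polynomial in
/-- The Legendre polynomial `legendreP n` as an element of `ℝ[X]`. -/
def legendrePoly (n : ℕ) : ℝ[X] :=
  C (1 / (2 ^ n * (n.factorial : ℝ))) * derivative^[n] ((X ^ 2 - 1) ^ n)

section LegendrePolynomials

open Polynomial

lemma iteratedDeriv_eval (p : ℝ[X]) (k : ℕ) :
    iteratedDeriv k (fun x => p.eval x) = fun x => (derivative^[k] p).eval x := by
  induction k with
  | zero => simp
  | succ k ih =>
    rw [iteratedDeriv_succ, ih, Function.iterate_succ_apply']
    exact funext fun x => Polynomial.deriv _

lemma iteratedDeriv_legendreP (n m : ℕ) :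
    iteratedDeriv m (legendreP n) = fun x => (derivative^[m] (legendrePoly n)).eval x := by
  have hpoly : legendreP n = fun x => (legendrePoly n).eval x := by
    have hbase : (fun y : ℝ => (y ^ 2 - 1) ^ n) = fun y => ((X ^ 2 - 1 : ℝ[X]) ^ n).eval y := by
      simp
    funext x
    rw [legendreP, hbase, iteratedDeriv_eval, legendrePoly, eval_mul, eval_C]
  rw [hpoly, iteratedDeriv_eval]

lemma hasDerivAt_iteratedDeriv_legendreP (n m : ℕ) (x : ℝ) :
    HasDerivAt (iteratedDeriv m (legendreP n)) (iteratedDeriv (m + 1) (legendreP n) x) x := by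
  simp only [iteratedDeriv_legendreP, Function.iterate_succ_apply']
  exact Polynomial.hasDerivAt _ _

lemma continuous_iteratedDeriv_legendreP (n m : ℕ) :
    Continuous (iteratedDeriv m (legendreP n)) :=
  continuous_iff_continuousAt.2 fun x => (hasDerivAt_iteratedDeriv_legendreP n m x).continuousAt

lemma X_sq_sub_one_mul_iterate_derivative_X_sq_sub_one_pow (n k : ℕ) :
    (X ^ 2 - 1 : ℝ[X]) * derivative^[k + 2] ((X ^ 2 - 1 : ℝ[X]) ^ n) =
      2 * ((n : ℝ[X]) - (k : ℝ[X]) - 1) * X * derivative^[k + 1] ((X ^ 2 - 1 : ℝ[X]) ^ n) +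
        ((k : ℝ[X]) + 1) * (2 * (n : ℝ[X]) - (k : ℝ[X])) *
          derivative^[k] ((X ^ 2 - 1 : ℝ[X]) ^ n) := by
  set w : ℝ[X] := (X ^ 2 - 1) ^ n with hw
  induction k with
  | zero =>
    have hfirst : (X ^ 2 - 1) * derivative w = 2 * (n : ℝ[X]) * X * w := by
      rcases n with _ | n
      · simp [hw]
      · simp only [hw, derivative_pow, derivative_sub, derivative_X, derivative_one, map_natCast]
        push_cast
        ring
    have h := congrArg derivative hfirst
    simp only [derivative_mul, derivative_sub, derivative_X_sq, derivative_one, derivative_X,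
      derivative_natCast, derivative_ofNat] at h
    simp only [Function.iterate_succ_apply', Function.iterate_zero_apply]
    linear_combination (norm := (push_cast; simp only [map_ofNat]; ring)) h
  | succ k ih =>
    have h := congrArg derivative ih
    simp only [derivative_mul, derivative_add, derivative_sub, derivative_X_sq, derivative_one,
      derivative_X, derivative_natCast, derivative_ofNat,
      ← Function.iterate_succ_apply' derivative] at h
    linear_combination (norm := (push_cast; simp only [map_ofNat]; ring)) h

lemma one_sub_sq_mul_iteratedDeriv_legendreP (n m : ℕ) (x : ℝ) :
    (1 - x ^ 2) * iteratedDeriv (m + 2) (legendreP n) x =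
      2 * ((m : ℝ) + 1) * x * iteratedDeriv (m + 1) (legendreP n) x -
        ((n : ℝ) - m) * (n + m + 1) * iteratedDeriv m (legendreP n) x := by
  have hrod := congrArg (eval x)
    (X_sq_sub_one_mul_iterate_derivative_X_sq_sub_one_pow n (m + n))
  simp only [eval_mul, eval_add, eval_sub, eval_pow, eval_X, eval_one, eval_natCast, eval_ofNat]
    at hrod
  simp only [iteratedDeriv_legendreP, legendrePoly, iterate_derivative_C_mul,
    ← Function.iterate_add_apply, eval_mul, eval_C, add_right_comm m _ n]
  push_cast at hrod
  linear_combination -(1 / (2 ^ n * (n.factorial : ℝ))) * hrod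

lemma legendreP_one (n : ℕ) : legendreP n 1 = 1 := by
  have hself := aeval_iterate_derivative_self ((X ^ 2 - 1 : ℝ[X]) ^ n) n (1 : ℝ)
    (p' := (X + 1) ^ n) (by
      simp only [Polynomial.map_pow, Polynomial.map_sub, map_X, Polynomial.map_one, map_one]
      rw [← mul_pow]
      ring)
  have h := congrFun (iteratedDeriv_legendreP n 0) 1
  simp only [iteratedDeriv_zero, Function.iterate_zero_apply, legendrePoly, eval_mul, eval_C] at h
  rw [coe_aeval_eq_eval] at hself
  rw [h, hself]
  simp only [eval_pow, eval_add, eval_X, eval_one, nsmul_eq_mul, one_add_one_eq_two]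
  field_simp

lemma iteratedDeriv_legendreP_one {n m : ℕ} (hm : m ≤ n) :
    (2 ^ m * m.factorial * (n - m).factorial : ℝ) * iteratedDeriv m (legendreP n) 1 =
      (n + m).factorial := by
  induction m with
  | zero => simp [legendreP_one]
  | succ m ih =>
    obtain ⟨d, rfl⟩ := Nat.exists_eq_add_of_lt hm
    have hode := one_sub_sq_mul_iteratedDeriv_legendreP (m + d + 1) m 1
    have h := ih (by omega)
    rw [show m + d + 1 - m = d + 1 by omega] at h
    rw [show m + d + 1 - (m + 1) = d by omega, ← add_assoc (m + d + 1) m 1,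
      Nat.factorial_succ (m + d + 1 + m), Nat.factorial_succ m]
    rw [Nat.factorial_succ d] at h
    push_cast at hode h ⊢
    linear_combination (2 * m + d + 2 : ℝ) * h - 2 ^ m * m.factorial * d.factorial * hode

end LegendrePolynomials

section ParametricIntegrals

open TopologicalSpace

variable {E Y : Type*} [NormedAddCommGroup E] [NormedSpace ℝ E]
  [TopologicalSpace Y] [MetrizableSpace Y] [MeasurableSpace Y] [BorelSpace Y]
  {μ : Measure Y} [IsFiniteMeasureOnCompacts μ] {K : Set Y}

lemma hasFDerivAt_setIntegral_of_isCompact {H : Type*} [NormedAddCommGroup H] [NormedSpace ℝ H]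
    [ProperSpace H] (hK : IsCompact K) {U : Set H} (hU : IsOpen U) {x₀ : H} (hx₀ : x₀ ∈ U)
    {F : H → Y → E} {F' : H → Y → H →L[ℝ] E}
    (hF : ∀ x ∈ U, ContinuousOn (F x) K)
    (hF' : ContinuousOn (fun z : H × Y => F' z.1 z.2) (U ×ˢ K))
    (hd : ∀ x ∈ U, ∀ y ∈ K, HasFDerivAt (F · y) (F' x y) x) :
    HasFDerivAt (fun x => ∫ y in K, F x y ∂μ) (∫ y in K, F' x₀ y ∂μ) x₀ := by
  obtain ⟨ε, hε, hεU⟩ := Metric.nhds_basis_closedBall.mem_iff.1 (hU.mem_nhds hx₀)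
  obtain ⟨C, hC⟩ := ((isCompact_closedBall x₀ ε).prod hK).exists_bound_of_continuousOn
    (hF'.mono (Set.prod_mono hεU subset_rfl))
  have hKm : MeasurableSet K := hK.measurableSet
  have hF'x₀ : ContinuousOn (F' x₀) K :=
    hF'.comp (f := fun y => (x₀, y)) (by fun_prop) fun y hy => ⟨hx₀, hy⟩
  refine hasFDerivAt_integral_of_dominated_of_fderiv_le (bound := fun _ => C)
    (Metric.closedBall_mem_nhds x₀ hε) ?_ ((hF x₀ hx₀).integrableOn_compact hK)
    (hF'x₀.aestronglyMeasurable_of_isCompact hK hKm) ?_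
    (continuousOn_const.integrableOn_compact hK) ?_
  · filter_upwards [hU.mem_nhds hx₀] with x hx
    exact (hF x hx).aestronglyMeasurable_of_isCompact hK hKm
  · filter_upwards [ae_restrict_mem hKm] with y hy x hx
    exact hC (x, y) ⟨hx, hy⟩
  · filter_upwards [ae_restrict_mem hKm] with y hy x hx
    exact hd x (hεU hx) y hy

lemma hasDerivAt_setIntegral_of_isCompact [CompleteSpace E] (hK : IsCompact K) {U : Set ℝ}
    (hU : IsOpen U) {x₀ : ℝ} (hx₀ : x₀ ∈ U) {F F' : ℝ → Y → E}
    (hF : ∀ x ∈ U, ContinuousOn (F x) K)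
    (hF' : ContinuousOn (fun z : ℝ × Y => F' z.1 z.2) (U ×ˢ K))
    (hd : ∀ x ∈ U, ∀ y ∈ K, HasDerivAt (F · y) (F' x y) x) :
    HasDerivAt (fun x => ∫ y in K, F x y ∂μ) (∫ y in K, F' x₀ y ∂μ) x₀ := by
  have hspan : ContinuousOn
      (fun z : ℝ × Y => ContinuousLinearMap.toSpanSingleton ℝ (F' z.1 z.2)) (U ×ˢ K) :=
    (ContinuousLinearMap.toSpanSingletonCLE (𝕜 := ℝ) (E := E)).continuous.comp_continuousOn hF'
  have hint : IntegrableOn (fun y => ContinuousLinearMap.toSpanSingleton ℝ (F' x₀ y)) K μ :=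
    (hspan.comp (f := fun y => (x₀, y)) (by fun_prop) fun y hy => ⟨hx₀, hy⟩).integrableOn_compact hK
  have h := (hasFDerivAt_setIntegral_of_isCompact (μ := μ) hK hU hx₀ hF hspan
    fun x hx y hy => (hd x hx y hy).hasFDerivAt).hasDerivAt
  rw [ContinuousLinearMap.integral_apply hint] at h
  simpa using h

lemma hasDerivAt_intervalIntegral_of_continuousOn [CompleteSpace E] {a b : ℝ} (hab : a ≤ b)
    {U : Set ℝ} (hU : IsOpen U) {x₀ : ℝ} (hx₀ : x₀ ∈ U) {F F' : ℝ → ℝ → E}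
    (hF : ∀ x ∈ U, ContinuousOn (F x) (Set.Icc a b))
    (hF' : ContinuousOn (fun z : ℝ × ℝ => F' z.1 z.2) (U ×ˢ Set.Icc a b))
    (hd : ∀ x ∈ U, ∀ y ∈ Set.Icc a b, HasDerivAt (F · y) (F' x y) x) :
    HasDerivAt (fun x => ∫ y in a..b, F x y) (∫ y in a..b, F' x₀ y) x₀ := by
  simpa only [intervalIntegral.integral_of_le hab, integral_Icc_eq_integral_Ioc] using
    hasDerivAt_setIntegral_of_isCompact (μ := volume) isCompact_Icc hU hx₀ hF hF' hd

variable {a b c d : ℝ} {F : ℝ → ℝ → E}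

lemma setIntegral_Icc_prod_Icc (hab : a ≤ b) (hcd : c ≤ d)
    (hF : ContinuousOn F.uncurry (Set.Icc a b ×ˢ Set.Icc c d)) :
    ∫ z in Set.Icc a b ×ˢ Set.Icc c d, F z.1 z.2 = ∫ x in a..b, ∫ y in c..d, F x y := by
  rw [Measure.volume_eq_prod, setIntegral_prod (fun z : ℝ × ℝ => F z.1 z.2)
    (hF.integrableOn_compact (isCompact_Icc.prod isCompact_Icc))]
  simp only [intervalIntegral.integral_of_le hab, intervalIntegral.integral_of_le hcd,
    integral_Icc_eq_integral_Ioc]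

lemma intervalIntegral_swap_of_continuousOn (hab : a ≤ b) (hcd : c ≤ d)
    (hF : ContinuousOn F.uncurry (Set.Icc a b ×ˢ Set.Icc c d)) :
    ∫ x in a..b, ∫ y in c..d, F x y = ∫ y in c..d, ∫ x in a..b, F x y := by
  refine intervalIntegral_intervalIntegral_swap
    ((hF.integrableOn_compact (isCompact_Icc.prod isCompact_Icc)).mono_set ?_)
  rw [Set.uIoc_of_le hab, Set.uIoc_of_le hcd]
  exact Set.prod_mono Set.Ioc_subset_Icc_self Set.Ioc_subset_Icc_self

end ParametricIntegrals

section SingularODE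

lemma energy_growth_le {C μ S c y y' y'' : ℝ} (hS : 0 < S) (hc : -(C * S) ≤ c)
    (hode : S * y'' + c * y' = μ * S * y) :
    2 * (y * y' + y' * y'') ≤ (1 + |μ| + 2 * |C|) * (y ^ 2 + y' ^ 2) := by
  have hsing : y' * y'' ≤ μ * (y * y') + C * y' ^ 2 := by
    refine le_of_mul_le_mul_left ?_ hS
    linear_combination mul_le_mul_of_nonneg_right hc (sq_nonneg y') + y' * hode
  have hyy' : 2 * |y * y'| ≤ y ^ 2 + y' ^ 2 := by
    rw [abs_mul, ← sq_abs y, ← sq_abs y', ← mul_assoc]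
    exact two_mul_le_add_sq _ _
  have hμ : μ * (y * y') ≤ |μ| * |y * y'| := by
    rw [← abs_mul]
    exact le_abs_self _
  nlinarith [le_abs_self (y * y'), mul_le_mul_of_nonneg_left hyy' (abs_nonneg μ),
    mul_le_mul_of_nonneg_right (le_abs_self C) (sq_nonneg y'),
    mul_nonneg (abs_nonneg C) (sq_nonneg y)]

/- At the regular singular point `0` the equation itself forces `y' 0 = 0`, and away from it the
singular term `c / S` only dissipates the energy `y ^ 2 + y' ^ 2`. -/
lemma eq_zero_of_singular_ode {b C μ : ℝ} {S c y y' y'' : ℝ → ℝ}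
    (hS₀ : S 0 = 0) (hc₀ : c 0 ≠ 0) (hS : ∀ x ∈ Set.Ioo 0 b, 0 < S x)
    (hc : ∀ x ∈ Set.Ioo 0 b, -(C * S x) ≤ c x)
    (hy : ∀ x ∈ Set.Icc 0 b, HasDerivAt y (y' x) x)
    (hy' : ∀ x ∈ Set.Icc 0 b, HasDerivAt y' (y'' x) x)
    (hode : ∀ x ∈ Set.Ico 0 b, S x * y'' x + c x * y' x = μ * S x * y x)
    (hy₀ : y 0 = 0) {x : ℝ} (hx : x ∈ Set.Icc 0 b) : y x = 0 := by
  rcases hx.1.eq_or_lt with rfl | hx₀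
  · exact hy₀
  have hb : 0 < b := hx₀.trans_le hx.2
  have hy'₀ : y' 0 = 0 := by
    simpa [hS₀, hc₀] using hode 0 ⟨le_rfl, hb⟩
  set K : ℝ := 1 + |μ| + 2 * |C|
  have henergy : ∀ x ∈ Set.Icc 0 b, HasDerivAt (fun x => exp (-K * x) * (y x ^ 2 + y' x ^ 2))
      (exp (-K * x) * (2 * (y x * y' x + y' x * y'' x) - K * (y x ^ 2 + y' x ^ 2))) x := by
    intro x hx
    have hexp := ((hasDerivAt_id x).const_mul (-K)).exp
    refine (hexp.mul (((hy x hx).pow 2).add ((hy' x hx).pow 2))).congr_deriv ?_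
    simp only [id, Pi.add_apply, Pi.pow_apply]
    push_cast
    ring
  have hanti : AntitoneOn (fun x => exp (-K * x) * (y x ^ 2 + y' x ^ 2)) (Set.Icc 0 b) := by
    refine antitoneOn_of_hasDerivWithinAt_nonpos (convex_Icc 0 b)
      (fun x hx => (henergy x hx).continuousAt.continuousWithinAt)
      (fun x hx => (henergy x (interior_subset hx)).hasDerivWithinAt) fun x hx => ?_
    rw [interior_Icc] at hx
    exact mul_nonpos_of_nonneg_of_nonpos (exp_pos _).le (sub_nonpos.2 <|
      energy_growth_le (hS x hx) (hc x hx) (hode x ⟨hx.1.le, hx.2⟩))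
  have hx_nonpos := hanti ⟨le_rfl, hb.le⟩ hx hx₀.le
  simp only [hy₀, hy'₀, ne_eq, OfNat.ofNat_ne_zero, not_false_eq_true, zero_pow, add_zero,
    mul_zero] at hx_nonpos
  have := nonpos_of_mul_nonpos_right hx_nonpos (exp_pos _)
  nlinarith [sq_nonneg (y x), sq_nonneg (y' x)]

lemma singular_ode_solutions_proportional {b C μ : ℝ} {S c y y' y'' z z' z'' : ℝ → ℝ}
    (hS₀ : S 0 = 0) (hc₀ : c 0 ≠ 0) (hS : ∀ x ∈ Set.Ioo 0 b, 0 < S x)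
    (hc : ∀ x ∈ Set.Ioo 0 b, -(C * S x) ≤ c x)
    (hy : ∀ x ∈ Set.Icc 0 b, HasDerivAt y (y' x) x)
    (hy' : ∀ x ∈ Set.Icc 0 b, HasDerivAt y' (y'' x) x)
    (hyode : ∀ x ∈ Set.Ico 0 b, S x * y'' x + c x * y' x = μ * S x * y x)
    (hz : ∀ x ∈ Set.Icc 0 b, HasDerivAt z (z' x) x)
    (hz' : ∀ x ∈ Set.Icc 0 b, HasDerivAt z' (z'' x) x)
    (hzode : ∀ x ∈ Set.Ico 0 b, S x * z'' x + c x * z' x = μ * S x * z x)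
    {x : ℝ} (hx : x ∈ Set.Icc 0 b) : z 0 * y x = y 0 * z x := by
  have h := eq_zero_of_singular_ode (μ := μ) (y := fun x => z 0 * y x - y 0 * z x) hS₀
    hc₀ hS hc (fun x hx => ((hy x hx).const_mul (z 0)).sub ((hz x hx).const_mul (y 0)))
    (fun x hx => ((hy' x hx).const_mul (z 0)).sub ((hz' x hx).const_mul (y 0)))
    (fun x hx => by linear_combination z 0 * hyode x hx - y 0 * hzode x hx) (by ring) hx
  exact sub_eq_zero.1 h

end SingularODE

section PowersOfFunctions

/-- The derivative of `X ^ r` along a curve on which `X` has derivative `X'`. -/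
def rpowDeriv (r X X' : ℝ) : ℝ := r * X ^ (r - 1) * X'

lemma rpow_sub_one_eq_rpow_sub_two_mul (r : ℝ) {x : ℝ} (hx : x ≠ 0) :
    x ^ (r - 1) = x ^ (r - 2) * x := by
  rw [← rpow_add_one hx]
  ring_nf

/-- The second derivative of `X ^ r` along a curve on which `X` has derivatives `X'` and `X''`. -/
def rpowDeriv₂ (r X X' X'' : ℝ) : ℝ := r * X ^ (r - 2) * (X * X'' + (r - 1) * X' ^ 2)

variable {X X' : ℝ → ℝ} {x r : ℝ}

lemma hasDerivAt_rpow_comp {X'x : ℝ} (hX : HasDerivAt X X'x x) (hpos : 0 < X x) :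
    HasDerivAt (fun x => X x ^ r) (rpowDeriv r (X x) X'x) x :=
  (hX.rpow_const (Or.inl hpos.ne')).congr_deriv (by rw [rpowDeriv]; ring)

lemma hasDerivAt_rpowDeriv {X'' : ℝ} (hX : HasDerivAt X (X' x) x) (hX' : HasDerivAt X' X'' x)
    (hpos : 0 < X x) :
    HasDerivAt (fun x => rpowDeriv r (X x) (X' x)) (rpowDeriv₂ r (X x) (X' x) X'') x := by
  refine (((hasDerivAt_rpow_comp hX hpos).const_mul r).mul hX').congr_deriv ?_
  rw [rpowDeriv, rpowDeriv₂, rpow_sub_one_eq_rpow_sub_two_mul r hpos.ne',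
    show r - 1 - 1 = r - 2 by ring]
  ring

variable {α : Type*} [TopologicalSpace α] {s : Set α} {Y Y' Y'' : α → ℝ}

lemma continuousOn_rpow_comp (hY : ContinuousOn Y s) (hpos : ∀ z ∈ s, 0 < Y z) :
    ContinuousOn (fun z => Y z ^ r) s :=
  hY.rpow_const fun z hz => Or.inl (hpos z hz).ne'

lemma continuousOn_rpowDeriv (hY : ContinuousOn Y s) (hY' : ContinuousOn Y' s)
    (hpos : ∀ z ∈ s, 0 < Y z) : ContinuousOn (fun z => rpowDeriv r (Y z) (Y' z)) s :=
  ((continuousOn_rpow_comp hY hpos).const_mul r).mul hY'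

lemma continuousOn_rpowDeriv₂ (hY : ContinuousOn Y s) (hY' : ContinuousOn Y' s)
    (hY'' : ContinuousOn Y'' s) (hpos : ∀ z ∈ s, 0 < Y z) :
    ContinuousOn (fun z => rpowDeriv₂ r (Y z) (Y' z) (Y'' z)) s :=
  ((continuousOn_rpow_comp hY hpos).const_mul r).mul
    ((hY.mul hY'').add ((hY'.pow 2).const_mul (r - 1)))

end PowersOfFunctions

section LegendreEquation

variable (n m : ℕ)

lemma hasDerivAt_iteratedDeriv_legendreP_cos (ψ : ℝ) :
    HasDerivAt (fun ψ => iteratedDeriv m (legendreP n) (cos ψ))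
      (-sin ψ * iteratedDeriv (m + 1) (legendreP n) (cos ψ)) ψ :=
  ((hasDerivAt_iteratedDeriv_legendreP n m (cos ψ)).comp ψ (hasDerivAt_cos ψ)).congr_deriv
    (mul_comm _ _)

lemma integral_legendreP_cos_mul_singular_op {f f' f'' : ℝ → ℝ}
    (hf : ∀ θ ∈ Set.Icc 0 π, HasDerivAt f (f' θ) θ)
    (hf' : ∀ θ ∈ Set.Icc 0 π, HasDerivAt f' (f'' θ) θ) (hf'' : ContinuousOn f'' (Set.Icc 0 π)) :
    ∫ θ in 0..π, sin θ ^ (2 * m) * iteratedDeriv m (legendreP n) (cos θ) *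
        (sin θ * f'' θ + (2 * m + 1) * cos θ * f' θ) =
      -(((n : ℝ) - m) * (n + m + 1)) *
        ∫ θ in 0..π, sin θ ^ (2 * m + 1) * iteratedDeriv m (legendreP n) (cos θ) * f θ := by
  have hcf : ContinuousOn f (Set.Icc 0 π) := fun θ hθ => (hf θ hθ).continuousAt.continuousWithinAt
  have hcf' : ContinuousOn f' (Set.Icc 0 π) :=
    fun θ hθ => (hf' θ hθ).continuousAt.continuousWithinAt
  have hp := (continuous_iteratedDeriv_legendreP n m).comp continuous_cos
  have hint : ∀ {g : ℝ → ℝ}, ContinuousOn g (Set.Icc 0 π) → IntervalIntegrable g volume 0 π :=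
    fun hg => hg.intervalIntegrable_of_Icc pi_pos.le
  have htotal : ∀ θ ∈ Set.uIcc 0 π, HasDerivAt
      (fun θ => sin θ ^ (2 * m + 1) * (iteratedDeriv m (legendreP n) (cos θ) * f' θ +
        sin θ * iteratedDeriv (m + 1) (legendreP n) (cos θ) * f θ))
      (sin θ ^ (2 * m) * iteratedDeriv m (legendreP n) (cos θ) *
          (sin θ * f'' θ + (2 * m + 1) * cos θ * f' θ) +
        ((n : ℝ) - m) * (n + m + 1) *
          (sin θ ^ (2 * m + 1) * iteratedDeriv m (legendreP n) (cos θ) * f θ)) θ := by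
    intro θ hθ
    rw [Set.uIcc_of_le pi_pos.le] at hθ
    refine (((hasDerivAt_sin θ).pow (2 * m + 1)).mul
      (((hasDerivAt_iteratedDeriv_legendreP_cos n m θ).mul (hf' θ hθ)).add
        (((hasDerivAt_sin θ).mul (hasDerivAt_iteratedDeriv_legendreP_cos n (m + 1) θ)).mul
          (hf θ hθ)))).congr_deriv ?_
    have hode := one_sub_sq_mul_iteratedDeriv_legendreP n m (cos θ)
    rw [← sin_sq] at hode
    simp only [Pi.pow_apply, Pi.add_apply, Pi.mul_apply, add_tsub_cancel_right, pow_succ _ (2 * m)]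
    push_cast
    linear_combination -(sin θ ^ (2 * m) * sin θ * f θ) * hode
  have hFTC := intervalIntegral.integral_eq_sub_of_hasDerivAt htotal (hint (by fun_prop))
  rw [intervalIntegral.integral_add (hint (by fun_prop)) (hint (by fun_prop)),
    intervalIntegral.integral_const_mul] at hFTC
  simp only [sin_pi, sin_zero, ne_eq, Nat.add_eq_zero_iff, one_ne_zero, and_false,
    not_false_eq_true, zero_pow, zero_mul, sub_zero] at hFTC
  linear_combination hFTC

end LegendreEquation

section FocalPotential

/-- The squared distance, in units of the semi-focal distance, from a point with spheroidal
coordinates `(u, cos ψ)` to the point `cos θ` of the segment between the foci. -/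
def focalDistSq (u ψ θ : ℝ) : ℝ :=
  u ^ 2 - 1 + cos ψ ^ 2 + cos θ ^ 2 - 2 * u * cos ψ * cos θ

variable {u : ℝ}

lemma focalDistSq_comm (u ψ θ : ℝ) : focalDistSq u ψ θ = focalDistSq u θ ψ := by
  unfold focalDistSq
  ring

lemma focalDistSq_pos (hu : 1 < u) (ψ θ : ℝ) : 0 < focalDistSq u ψ θ := by
  have hfactor : focalDistSq u ψ θ = (u - cos (ψ - θ)) * (u - cos (ψ + θ)) := by
    rw [cos_sub, cos_add, focalDistSq]
    linear_combination sin ψ ^ 2 * sin_sq θ + (1 - cos θ ^ 2) * sin_sq ψ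
  rw [hfactor]
  exact mul_pos (sub_pos.2 ((cos_le_one _).trans_lt hu)) (sub_pos.2 ((cos_le_one _).trans_lt hu))

lemma hasDerivAt_focalDistSq (u ψ θ : ℝ) :
    HasDerivAt (focalDistSq u · θ) (2 * sin ψ * (u * cos θ - cos ψ)) ψ := by
  unfold focalDistSq
  refine (((((hasDerivAt_cos ψ).pow 2).const_add (u ^ 2 - 1)).add_const (cos θ ^ 2)).sub
    (((hasDerivAt_cos ψ).const_mul (2 * u)).mul_const (cos θ))).congr_deriv ?_
  push_cast
  ring

/-- The first derivative of `focalDistSq u ψ θ ^ r` in `ψ`. -/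
def focalKernel₁ (r u ψ θ : ℝ) : ℝ :=
  rpowDeriv r (focalDistSq u ψ θ) (2 * sin ψ * (u * cos θ - cos ψ))

/-- The second derivative of `focalDistSq u ψ θ ^ r` in `ψ`. -/
def focalKernel₂ (r u ψ θ : ℝ) : ℝ :=
  rpowDeriv₂ r (focalDistSq u ψ θ) (2 * sin ψ * (u * cos θ - cos ψ))
    (2 * (cos ψ * (u * cos θ - cos ψ) + sin ψ ^ 2))

lemma hasDerivAt_focalDistSq_rpow (r : ℝ) (hu : 1 < u) (ψ θ : ℝ) :
    HasDerivAt (focalDistSq u · θ ^ r) (focalKernel₁ r u ψ θ) ψ :=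
  hasDerivAt_rpow_comp (hasDerivAt_focalDistSq u ψ θ) (focalDistSq_pos hu ψ θ)

lemma hasDerivAt_focalKernel₁ (r : ℝ) (hu : 1 < u) (ψ θ : ℝ) :
    HasDerivAt (focalKernel₁ r u · θ) (focalKernel₂ r u ψ θ) ψ := by
  refine hasDerivAt_rpowDeriv (hasDerivAt_focalDistSq u ψ θ) ?_ (focalDistSq_pos hu ψ θ)
  refine (((hasDerivAt_sin ψ).const_mul 2).mul
    ((hasDerivAt_cos ψ).const_sub (u * cos θ))).congr_deriv ?_
  ring

lemma focalKernel_pde {r : ℝ} (hu : 1 < u) (ψ θ : ℝ) :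
    sin θ * (sin ψ * focalKernel₂ r u ψ θ - 2 * r * cos ψ * focalKernel₁ r u ψ θ) =
      sin ψ * (sin θ * focalKernel₂ r u θ ψ - 2 * r * cos θ * focalKernel₁ r u θ ψ) := by
  have hpow := rpow_sub_one_eq_rpow_sub_two_mul r (focalDistSq_pos hu ψ θ).ne'
  simp only [focalKernel₁, focalKernel₂, rpowDeriv, rpowDeriv₂, focalDistSq_comm u θ ψ, hpow]
  have hψ := sin_sq ψ
  have hθ := sin_sq θ
  generalize focalDistSq u ψ θ ^ (r - 2) = R
  unfold focalDistSq
  grind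

lemma continuous_focalDistSq (u : ℝ) : Continuous fun z : ℝ × ℝ => focalDistSq u z.1 z.2 := by
  unfold focalDistSq
  fun_prop

lemma continuous_focalDistSq_rpow (r : ℝ) (hu : 1 < u) :
    Continuous fun z : ℝ × ℝ => focalDistSq u z.1 z.2 ^ r :=
  continuousOn_univ.1 (continuousOn_rpow_comp (continuous_focalDistSq u).continuousOn
    fun z _ => focalDistSq_pos hu z.1 z.2)

lemma continuous_focalKernel₁ (r : ℝ) (hu : 1 < u) :
    Continuous fun z : ℝ × ℝ => focalKernel₁ r u z.1 z.2 :=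
  continuousOn_univ.1 (continuousOn_rpowDeriv (continuous_focalDistSq u).continuousOn
    (Continuous.continuousOn (by fun_prop)) fun z _ => focalDistSq_pos hu z.1 z.2)

lemma continuous_focalKernel₂ (r : ℝ) (hu : 1 < u) :
    Continuous fun z : ℝ × ℝ => focalKernel₂ r u z.1 z.2 :=
  continuousOn_univ.1 (continuousOn_rpowDeriv₂ (continuous_focalDistSq u).continuousOn
    (Continuous.continuousOn (by fun_prop)) (Continuous.continuousOn (by fun_prop))
    fun z _ => focalDistSq_pos hu z.1 z.2)

variable (n m : ℕ)

/-- The potential at `(u, cos ψ)` of the density `(1 - s ^ 2) ^ m * P_n^{(m)} s` on the segment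
between the foci, for the kernel `dist ^ (2 * r)`. -/
def focalPotential (r u ψ : ℝ) : ℝ :=
  ∫ θ in 0..π, sin θ ^ (2 * m + 1) * iteratedDeriv m (legendreP n) (cos θ) *
    focalDistSq u ψ θ ^ r

lemma hasDerivAt_integral_legendreP_cos_mul {k k' : ℝ → ℝ → ℝ}
    (hk : Continuous fun z : ℝ × ℝ => k z.1 z.2) (hk' : Continuous fun z : ℝ × ℝ => k' z.1 z.2)
    (hd : ∀ ψ θ, HasDerivAt (k · θ) (k' ψ θ) ψ) (ψ : ℝ) :
    HasDerivAt
      (fun ψ => ∫ θ in 0..π, sin θ ^ (2 * m + 1) * iteratedDeriv m (legendreP n) (cos θ) * k ψ θ)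
      (∫ θ in 0..π, sin θ ^ (2 * m + 1) * iteratedDeriv m (legendreP n) (cos θ) * k' ψ θ) ψ := by
  have hp := continuous_iteratedDeriv_legendreP n m
  refine hasDerivAt_intervalIntegral_of_continuousOn pi_pos.le isOpen_univ (Set.mem_univ ψ)
    (F := fun ψ θ => sin θ ^ (2 * m + 1) * iteratedDeriv m (legendreP n) (cos θ) * k ψ θ)
    (fun ψ _ => ?_) (Continuous.continuousOn (by fun_prop)) fun ψ _ θ _ => (hd ψ θ).const_mul _
  have : Continuous (k ψ) := .uncurry_left ψ hk
  exact Continuous.continuousOn (by fun_prop)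

lemma focalPotential_ode {r : ℝ} (hr : r = -m - 1 / 2) (hu : 1 < u) (ψ : ℝ) :
    sin ψ * (∫ θ in 0..π, sin θ ^ (2 * m + 1) * iteratedDeriv m (legendreP n) (cos θ) *
          focalKernel₂ r u ψ θ) +
        (2 * m + 1) * cos ψ * (∫ θ in 0..π, sin θ ^ (2 * m + 1) *
          iteratedDeriv m (legendreP n) (cos θ) * focalKernel₁ r u ψ θ) =
      -(((n : ℝ) - m) * (n + m + 1)) * sin ψ * focalPotential n m r u ψ := by
  have hp := continuous_iteratedDeriv_legendreP n m
  have h₁ : Continuous (focalKernel₁ r u ψ) :=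
    .uncurry_left ψ (continuous_focalKernel₁ r hu)
  have h₂ : Continuous (focalKernel₂ r u ψ) :=
    .uncurry_left ψ (continuous_focalKernel₂ r hu)
  have h₂' : Continuous (focalKernel₂ r u · ψ) :=
    .uncurry_right ψ (continuous_focalKernel₂ r hu)
  have hadj := integral_legendreP_cos_mul_singular_op n m
    (fun θ _ => hasDerivAt_focalDistSq_rpow r hu θ ψ) (fun θ _ => hasDerivAt_focalKernel₁ r hu θ ψ)
    h₂'.continuousOn
  simp only [focalDistSq_comm u _ ψ] at hadj
  rw [focalPotential, mul_right_comm (-_), ← hadj, ← intervalIntegral.integral_const_mul,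
    ← intervalIntegral.integral_const_mul, ← intervalIntegral.integral_mul_const,
    ← intervalIntegral.integral_add (Continuous.intervalIntegrable (by fun_prop) _ _)
      (Continuous.intervalIntegrable (by fun_prop) _ _)]
  refine intervalIntegral.integral_congr fun θ _ => ?_
  have hpde := focalKernel_pde (r := r) hu ψ θ
  have h2r : 2 * (m : ℝ) + 1 = -2 * r := by
    rw [hr]
    ring
  simp only [h2r, pow_succ _ (2 * m)]
  linear_combination sin θ ^ (2 * m) * iteratedDeriv m (legendreP n) (cos θ) * hpde

lemma sin_mul_legendreP_cos_ode (ψ : ℝ) :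
    sin ψ * (sin ψ ^ 2 * iteratedDeriv (m + 2) (legendreP n) (cos ψ) -
          cos ψ * iteratedDeriv (m + 1) (legendreP n) (cos ψ)) +
        (2 * m + 1) * cos ψ * (-sin ψ * iteratedDeriv (m + 1) (legendreP n) (cos ψ)) =
      -(((n : ℝ) - m) * (n + m + 1)) * sin ψ * iteratedDeriv m (legendreP n) (cos ψ) := by
  have h := one_sub_sq_mul_iteratedDeriv_legendreP n m (cos ψ)
  rw [← sin_sq] at h
  linear_combination sin ψ * h

lemma cos_div_sin_mul_sin_le_cos {x ψ : ℝ} (hx : 0 < x) (hxψ : x ≤ ψ) (hψ : ψ < π) :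
    cos ψ / sin ψ * sin x ≤ cos x := by
  have hsub : 0 ≤ sin (ψ - x) :=
    sin_nonneg_of_nonneg_of_le_pi (sub_nonneg.2 hxψ) (by linarith)
  rw [sin_sub] at hsub
  rw [div_mul_eq_mul_div, div_le_iff₀ (sin_pos_of_pos_of_lt_pi (hx.trans_le hxψ) hψ)]
  linarith

lemma legendreP_one_mul_focalPotential {r : ℝ} (hr : r = -m - 1 / 2) (hu : 1 < u) {ψ : ℝ}
    (hψ₀ : 0 ≤ ψ) (hψ : ψ < π) :
    iteratedDeriv m (legendreP n) 1 * focalPotential n m r u ψ =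
      focalPotential n m r u 0 * iteratedDeriv m (legendreP n) (cos ψ) := by
  have hsin : ∀ x ∈ Set.Ioo 0 ψ, 0 < sin x := fun x hx =>
    sin_pos_of_pos_of_lt_pi hx.1 (hx.2.trans hψ)
  have hcot : ∀ x ∈ Set.Ioo 0 ψ,
      -(-((2 * m + 1) * (cos ψ / sin ψ)) * sin x) ≤ (2 * m + 1) * cos x := by
    intro x hx
    linear_combination (2 * m + 1 : ℝ) * cos_div_sin_mul_sin_le_cos hx.1 hx.2.le hψ
  have hp' : ∀ x, HasDerivAt (fun x => -sin x * iteratedDeriv (m + 1) (legendreP n) (cos x))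
      (sin x ^ 2 * iteratedDeriv (m + 2) (legendreP n) (cos x) -
        cos x * iteratedDeriv (m + 1) (legendreP n) (cos x)) x := fun x =>
    ((hasDerivAt_sin x).fun_neg.mul
      (hasDerivAt_iteratedDeriv_legendreP_cos n (m + 1) x)).congr_deriv (by ring)
  simpa only [cos_zero, focalPotential] using singular_ode_solutions_proportional
    (c := fun x => (2 * m + 1) * cos x) sin_zero
    (by simp only [cos_zero, mul_one, ne_eq]; positivity) hsin hcot
    (fun x _ => hasDerivAt_integral_legendreP_cos_mul n m (continuous_focalDistSq_rpow r hu)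
      (continuous_focalKernel₁ r hu) (fun ψ θ => hasDerivAt_focalDistSq_rpow r hu ψ θ) x)
    (fun x _ => hasDerivAt_integral_legendreP_cos_mul n m (continuous_focalKernel₁ r hu)
      (continuous_focalKernel₂ r hu) (fun ψ θ => hasDerivAt_focalKernel₁ r hu ψ θ) x)
    (fun x _ => focalPotential_ode n m hr hu x)
    (fun x _ => hasDerivAt_iteratedDeriv_legendreP_cos n m x) (fun x _ => hp' x)
    (fun x _ => sin_mul_legendreP_cos_ode n m x) (Set.right_mem_Icc.2 hψ₀)

end FocalPotential

section SpheroidalDistance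

/-- The squared distance between the point at radius `A` and height `B` in a half-plane through the
axis, and the point with elliptic coordinates `(η, θ)` in the half-plane at angle `t` to it, the
foci being at heights `±1`. -/
def ellipticDistSq (A B η θ t : ℝ) : ℝ :=
  A ^ 2 + B ^ 2 + (sinh η * sin θ) ^ 2 + (cosh η * cos θ) ^ 2 - 2 * B * (cosh η * cos θ) -
    2 * A * (sinh η * sin θ) * cos t

/-- The partial derivative of `ellipticDistSq` in `η`. -/
def ellipticDistSqη (A B η θ t : ℝ) : ℝ :=
  2 * (sinh η * cosh η - B * (sinh η * cos θ) - A * (cosh η * sin θ) * cos t)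

/-- The second partial derivative of `ellipticDistSq` in `η`. -/
def ellipticDistSqηη (A B η θ t : ℝ) : ℝ :=
  2 * (cosh η ^ 2 + sinh η ^ 2 - B * (cosh η * cos θ) - A * (sinh η * sin θ) * cos t)

/-- The partial derivative of `ellipticDistSq` in `θ`. -/
def ellipticDistSqθ (A B η θ t : ℝ) : ℝ :=
  2 * (B * (cosh η * sin θ) - sin θ * cos θ - A * (sinh η * cos θ) * cos t)

/-- The second partial derivative of `ellipticDistSq` in `θ`. -/
def ellipticDistSqθθ (A B η θ t : ℝ) : ℝ :=
  2 * (sin θ ^ 2 - cos θ ^ 2 + B * (cosh η * cos θ) + A * (sinh η * sin θ) * cos t)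

/-- The first derivative of `ellipticDistSq A B η θ t ^ r` in `η`. -/
def ellipticKernelη (A B r η θ t : ℝ) : ℝ :=
  rpowDeriv r (ellipticDistSq A B η θ t) (ellipticDistSqη A B η θ t)

/-- The second derivative of `ellipticDistSq A B η θ t ^ r` in `η`. -/
def ellipticKernelηη (A B r η θ t : ℝ) : ℝ :=
  rpowDeriv₂ r (ellipticDistSq A B η θ t) (ellipticDistSqη A B η θ t) (ellipticDistSqηη A B η θ t)

/-- The first derivative of `ellipticDistSq A B η θ t ^ r` in `θ`. -/
def ellipticKernelθ (A B r η θ t : ℝ) : ℝ :=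
  rpowDeriv r (ellipticDistSq A B η θ t) (ellipticDistSqθ A B η θ t)

/-- The second derivative of `ellipticDistSq A B η θ t ^ r` in `θ`. -/
def ellipticKernelθθ (A B r η θ t : ℝ) : ℝ :=
  rpowDeriv₂ r (ellipticDistSq A B η θ t) (ellipticDistSqθ A B η θ t) (ellipticDistSqθθ A B η θ t)

/-- The function `sin t ^ (2 * r + 1) * ∂ₜ (sin t ^ (-2 * r) * ellipticDistSq A B η θ t ^ (r - 1))`,
written without the powers of `sin t`. -/
def azimuthalDivergence (A B r η θ t : ℝ) : ℝ :=
  ellipticDistSq A B η θ t ^ (r - 2) * (2 * (r - 1) * A * (sinh η * sin θ) * sin t ^ 2 -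
    2 * r * cos t * ellipticDistSq A B η θ t)

variable (A B η θ t : ℝ)

lemma hasDerivAt_ellipticDistSq_η :
    HasDerivAt (ellipticDistSq A B · θ t) (ellipticDistSqη A B η θ t) η := by
  have hsh := (hasDerivAt_sinh η).mul_const (sin θ)
  have hch := (hasDerivAt_cosh η).mul_const (cos θ)
  refine (((((hsh.pow 2).const_add (A ^ 2 + B ^ 2)).add (hch.pow 2)).sub
    (hch.const_mul (2 * B))).sub ((hsh.const_mul (2 * A)).mul_const (cos t))).congr_deriv ?_
  rw [ellipticDistSqη]
  push_cast
  linear_combination 2 * sinh η * cosh η * sin_sq_add_cos_sq θ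

lemma hasDerivAt_ellipticDistSqη_η :
    HasDerivAt (ellipticDistSqη A B · θ t) (ellipticDistSqηη A B η θ t) η := by
  have hsh := hasDerivAt_sinh η
  have hch := hasDerivAt_cosh η
  refine ((((hsh.mul hch).sub ((hsh.mul_const (cos θ)).const_mul B)).sub
    (((hch.mul_const (sin θ)).const_mul A).mul_const (cos t))).const_mul 2).congr_deriv ?_
  rw [ellipticDistSqηη]
  ring

lemma hasDerivAt_ellipticDistSq_θ :
    HasDerivAt (ellipticDistSq A B η · t) (ellipticDistSqθ A B η θ t) θ := by
  have hsn := (hasDerivAt_sin θ).const_mul (sinh η)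
  have hcs := (hasDerivAt_cos θ).const_mul (cosh η)
  refine (((((hsn.pow 2).const_add (A ^ 2 + B ^ 2)).add (hcs.pow 2)).sub
    (hcs.const_mul (2 * B))).sub ((hsn.const_mul (2 * A)).mul_const (cos t))).congr_deriv ?_
  rw [ellipticDistSqθ]
  push_cast
  linear_combination -2 * sin θ * cos θ * cosh_sq η

lemma hasDerivAt_ellipticDistSqθ_θ :
    HasDerivAt (ellipticDistSqθ A B η · t) (ellipticDistSqθθ A B η θ t) θ := by
  have hsn := hasDerivAt_sin θ
  have hcs := hasDerivAt_cos θ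
  refine (((((hsn.const_mul (cosh η)).const_mul B).sub (hsn.mul hcs)).sub
    (((hcs.const_mul (sinh η)).const_mul A).mul_const (cos t))).const_mul 2).congr_deriv ?_
  rw [ellipticDistSqθθ]
  ring

lemma hasDerivAt_ellipticDistSq_t :
    HasDerivAt (ellipticDistSq A B η θ) (2 * A * (sinh η * sin θ) * sin t) t :=
  (((hasDerivAt_cos t).const_mul (2 * A * (sinh η * sin θ))).const_sub _).congr_deriv (by ring)

lemma ellipticDistSq_zero :
    ellipticDistSq A B 0 θ t = A ^ 2 + B ^ 2 + cos θ ^ 2 - 2 * B * cos θ := by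
  simp [ellipticDistSq]

variable {A B η θ t} in
/-- In elliptic coordinates the Euler-Poisson-Darboux operator splits, up to a divergence in the
azimuth `t`, into the two singular operators of the Legendre equation. -/
lemma ellipticKernel_pde {r : ℝ} (hpos : 0 < ellipticDistSq A B η θ t) :
    sin θ * (sinh η * ellipticKernelηη A B r η θ t -
          2 * r * cosh η * ellipticKernelη A B r η θ t) +
        sinh η * (sin θ * ellipticKernelθθ A B r η θ t -
          2 * r * cos θ * ellipticKernelθ A B r η θ t) =
      -(2 * A * r * (sinh η ^ 2 + sin θ ^ 2) * azimuthalDivergence A B r η θ t) := by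
  have hlaplace : ellipticDistSqηη A B η θ t + ellipticDistSqθθ A B η θ t =
      4 * (sinh η ^ 2 + sin θ ^ 2) := by
    rw [ellipticDistSqηη, ellipticDistSqθθ, cosh_sq, cos_sq']
    ring
  have hradial : cosh η * sin θ * ellipticDistSqη A B η θ t +
        sinh η * cos θ * ellipticDistSqθ A B η θ t =
      (sinh η ^ 2 + sin θ ^ 2) * (2 * (sinh η * sin θ) - 2 * A * cos t) := by
    rw [ellipticDistSqη, ellipticDistSqθ]
    linear_combination (2 * sinh η * sin θ - 2 * A * sin θ ^ 2 * cos t) * cosh_sq η -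
      (2 * sinh η * sin θ + 2 * A * sinh η ^ 2 * cos t) * cos_sq' θ
  have hgradient : ellipticDistSqη A B η θ t ^ 2 + ellipticDistSqθ A B η θ t ^ 2 =
      (sinh η ^ 2 + sin θ ^ 2) * (4 * ellipticDistSq A B η θ t - 4 * A ^ 2 * sin t ^ 2) := by
    have hch := cosh_sq η
    have hcs := cos_sq' θ
    have hct := cos_sq' t
    rw [ellipticDistSqη, ellipticDistSqθ, ellipticDistSq]
    grind
  have hpow := rpow_sub_one_eq_rpow_sub_two_mul r hpos.ne'
  simp only [ellipticKernelη, ellipticKernelηη, ellipticKernelθ, ellipticKernelθθ, rpowDeriv,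
    rpowDeriv₂, azimuthalDivergence, hpow]
  linear_combination r * ellipticDistSq A B η θ t ^ (r - 2) *
    (sin θ * sinh η * ellipticDistSq A B η θ t * hlaplace +
      sin θ * sinh η * (r - 1) * hgradient - 2 * r * ellipticDistSq A B η θ t * hradial)

end SpheroidalDistance

section EllipticPotential

variable (n m : ℕ)

/-- The integral of a kernel `k θ t` against the weight
`sin θ ^ (2 * m + 1) * P_n^{(m)} (cos θ) * sin t ^ (2 * m)`, over `θ` in `[0, π]` and the azimuth
`t` in `[0, 2π]`. -/
def weightedIntegral (k : ℝ → ℝ → ℝ) : ℝ :=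
  ∫ z in Set.Icc 0 π ×ˢ Set.Icc 0 (2 * π),
    sin z.1 ^ (2 * m + 1) * iteratedDeriv m (legendreP n) (cos z.1) * sin z.2 ^ (2 * m) * k z.1 z.2

variable {n m}

lemma hasDerivAt_weightedIntegral {U : Set ℝ} (hU : IsOpen U) {η : ℝ} (hη : η ∈ U)
    {k k' : ℝ → ℝ → ℝ → ℝ}
    (hk : ContinuousOn (fun z : ℝ × ℝ × ℝ => k z.1 z.2.1 z.2.2) (U ×ˢ Set.univ))
    (hk' : ContinuousOn (fun z : ℝ × ℝ × ℝ => k' z.1 z.2.1 z.2.2) (U ×ˢ Set.univ))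
    (hd : ∀ η ∈ U, ∀ θ t, HasDerivAt (k · θ t) (k' η θ t) η) :
    HasDerivAt (fun η => weightedIntegral n m (k η)) (weightedIntegral n m (k' η)) η := by
  have hp := continuous_iteratedDeriv_legendreP n m
  refine hasDerivAt_setIntegral_of_isCompact (isCompact_Icc.prod isCompact_Icc) hU hη
    (F := fun η z => sin z.1 ^ (2 * m + 1) * iteratedDeriv m (legendreP n) (cos z.1) *
      sin z.2 ^ (2 * m) * k η z.1 z.2) (fun η hη => ?_) ?_
    fun η hη z _ => (hd η hη z.1 z.2).const_mul _
  · exact ContinuousOn.mul (Continuous.continuousOn (by fun_prop))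
      (hk.comp (f := fun z => (η, z)) (by fun_prop) fun z _ => ⟨hη, trivial⟩)
  · exact ContinuousOn.mul (Continuous.continuousOn (by fun_prop))
      (hk'.mono (Set.prod_mono_right (Set.subset_univ _)))

lemma setIntegral_singular_op_eq_weightedIntegral {k k' k'' : ℝ → ℝ → ℝ}
    (hk : Continuous fun z : ℝ × ℝ => k z.1 z.2) (hk' : Continuous fun z : ℝ × ℝ => k' z.1 z.2)
    (hk'' : Continuous fun z : ℝ × ℝ => k'' z.1 z.2)
    (hd : ∀ θ t, HasDerivAt (k · t) (k' θ t) θ) (hd' : ∀ θ t, HasDerivAt (k' · t) (k'' θ t) θ) :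
    ∫ z in Set.Icc 0 π ×ˢ Set.Icc 0 (2 * π), sin z.1 ^ (2 * m) *
        iteratedDeriv m (legendreP n) (cos z.1) * sin z.2 ^ (2 * m) *
        (sin z.1 * k'' z.1 z.2 + (2 * m + 1) * cos z.1 * k' z.1 z.2) =
      -(((n : ℝ) - m) * (n + m + 1)) * weightedIntegral n m k := by
  have hp := continuous_iteratedDeriv_legendreP n m
  have hrect : ∀ F : ℝ → ℝ → ℝ, Continuous (fun z : ℝ × ℝ => F z.1 z.2) →
      ∫ z in Set.Icc 0 π ×ˢ Set.Icc 0 (2 * π), F z.1 z.2 =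
        ∫ t in 0..(2 * π), ∫ θ in 0..π, F θ t := fun F hF => by
    rw [setIntegral_Icc_prod_Icc pi_pos.le two_pi_pos.le hF.continuousOn,
      intervalIntegral_swap_of_continuousOn pi_pos.le two_pi_pos.le hF.continuousOn]
  rw [weightedIntegral, hrect (fun θ t => sin θ ^ (2 * m + 1) *
      iteratedDeriv m (legendreP n) (cos θ) * sin t ^ (2 * m) * k θ t) (by fun_prop),
    ← intervalIntegral.integral_const_mul]
  refine (hrect (fun θ t => sin θ ^ (2 * m) * iteratedDeriv m (legendreP n) (cos θ) *
    sin t ^ (2 * m) * (sin θ * k'' θ t + (2 * m + 1) * cos θ * k' θ t)) (by fun_prop)).trans ?_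
  refine intervalIntegral.integral_congr fun t _ => ?_
  have hadj := integral_legendreP_cos_mul_singular_op n m (fun θ _ => hd θ t) (fun θ _ => hd' θ t)
    (Continuous.uncurry_right t hk'').continuousOn
  simp only [mul_right_comm _ (sin t ^ (2 * m)), intervalIntegral.integral_mul_const]
  rw [hadj, mul_assoc]

lemma integral_azimuthalDivergence {A B η θ r : ℝ} (hr : r = -m - 1 / 2)
    (hpos : ∀ t, 0 < ellipticDistSq A B η θ t) :
    ∫ t in 0..(2 * π), sin t ^ (2 * m) * azimuthalDivergence A B r η θ t = 0 := by
  have hX : Continuous (ellipticDistSq A B η θ) := by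
    unfold ellipticDistSq
    fun_prop
  have hXr : Continuous fun t => ellipticDistSq A B η θ t ^ (r - 2) :=
    hX.rpow_const fun t => Or.inl (hpos t).ne'
  have hdiv : Continuous (azimuthalDivergence A B r η θ) := hXr.mul (by fun_prop)
  have htotal : ∀ t, HasDerivAt (fun t => sin t ^ (2 * m + 1) * ellipticDistSq A B η θ t ^ (r - 1))
      (sin t ^ (2 * m) * azimuthalDivergence A B r η θ t) t := by
    intro t
    refine (((hasDerivAt_sin t).pow (2 * m + 1)).mul (hasDerivAt_rpow_comp
      (hasDerivAt_ellipticDistSq_t A B η θ t) (hpos t))).congr_deriv ?_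
    rw [azimuthalDivergence, rpowDeriv, rpow_sub_one_eq_rpow_sub_two_mul r (hpos t).ne',
      show r - 1 - 1 = r - 2 by ring, hr, Pi.pow_apply, add_tsub_cancel_right]
    push_cast
    ring
  rw [intervalIntegral.integral_eq_sub_of_hasDerivAt (fun t _ => htotal t)
    (Continuous.intervalIntegrable (by fun_prop) _ _)]
  simp

variable {A B : ℝ} {U : Set ℝ}

section Kernels

variable (r : ℝ) (hpos : ∀ η ∈ U, ∀ θ t, 0 < ellipticDistSq A B η θ t)
include hpos

lemma continuousOn_ellipticDistSq_rpow :
    ContinuousOn (fun z : ℝ × ℝ × ℝ => ellipticDistSq A B z.1 z.2.1 z.2.2 ^ r) (U ×ˢ Set.univ) :=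
  continuousOn_rpow_comp (by unfold ellipticDistSq; fun_prop) fun z hz => hpos z.1 hz.1 _ _

lemma continuousOn_ellipticKernelη :
    ContinuousOn (fun z : ℝ × ℝ × ℝ => ellipticKernelη A B r z.1 z.2.1 z.2.2) (U ×ˢ Set.univ) :=
  continuousOn_rpowDeriv (by unfold ellipticDistSq; fun_prop)
    (by unfold ellipticDistSqη; fun_prop) fun z hz => hpos z.1 hz.1 _ _

lemma continuousOn_ellipticKernelηη :
    ContinuousOn (fun z : ℝ × ℝ × ℝ => ellipticKernelηη A B r z.1 z.2.1 z.2.2) (U ×ˢ Set.univ) :=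
  continuousOn_rpowDeriv₂ (by unfold ellipticDistSq; fun_prop)
    (by unfold ellipticDistSqη; fun_prop) (by unfold ellipticDistSqηη; fun_prop)
    fun z hz => hpos z.1 hz.1 _ _

lemma continuousOn_ellipticKernelθ :
    ContinuousOn (fun z : ℝ × ℝ × ℝ => ellipticKernelθ A B r z.1 z.2.1 z.2.2) (U ×ˢ Set.univ) :=
  continuousOn_rpowDeriv (by unfold ellipticDistSq; fun_prop)
    (by unfold ellipticDistSqθ; fun_prop) fun z hz => hpos z.1 hz.1 _ _

lemma continuousOn_ellipticKernelθθ :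
    ContinuousOn (fun z : ℝ × ℝ × ℝ => ellipticKernelθθ A B r z.1 z.2.1 z.2.2) (U ×ˢ Set.univ) :=
  continuousOn_rpowDeriv₂ (by unfold ellipticDistSq; fun_prop)
    (by unfold ellipticDistSqθ; fun_prop) (by unfold ellipticDistSqθθ; fun_prop)
    fun z hz => hpos z.1 hz.1 _ _

lemma continuousOn_azimuthalDivergence :
    ContinuousOn (fun z : ℝ × ℝ × ℝ => azimuthalDivergence A B r z.1 z.2.1 z.2.2)
      (U ×ˢ Set.univ) :=
  (continuousOn_ellipticDistSq_rpow (r - 2) hpos).mul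
    (Continuous.continuousOn (by unfold ellipticDistSq; fun_prop))

end Kernels

lemma continuous_slice {k : ℝ → ℝ → ℝ → ℝ} {η : ℝ} (hη : η ∈ U)
    (hk : ContinuousOn (fun z : ℝ × ℝ × ℝ => k z.1 z.2.1 z.2.2) (U ×ˢ Set.univ)) :
    Continuous fun z : ℝ × ℝ => k η z.1 z.2 :=
  hk.comp_continuous (f := fun z => (η, z)) (by fun_prop) fun _ => ⟨hη, trivial⟩

lemma setIntegral_azimuthalDivergence {g : ℝ → ℝ} (hg : Continuous g) {η r : ℝ}
    (hr : r = -m - 1 / 2) (hpos : ∀ θ t, 0 < ellipticDistSq A B η θ t)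
    (hdiv : Continuous fun z : ℝ × ℝ => azimuthalDivergence A B r η z.1 z.2) :
    ∫ z in Set.Icc 0 π ×ˢ Set.Icc 0 (2 * π),
      g z.1 * (sin z.2 ^ (2 * m) * azimuthalDivergence A B r η z.1 z.2) = 0 := by
  refine (setIntegral_Icc_prod_Icc pi_pos.le two_pi_pos.le
    (F := fun θ t => g θ * (sin t ^ (2 * m) * azimuthalDivergence A B r η θ t))
    (Continuous.continuousOn (by simp only [Function.uncurry_def]; fun_prop))).trans ?_
  simp only [intervalIntegral.integral_const_mul, integral_azimuthalDivergence hr (hpos _),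
    mul_zero, intervalIntegral.integral_zero]

lemma sin_pow_mul_ellipticKernel_pde {η θ t r : ℝ} (hr : r = -m - 1 / 2)
    (hpos : 0 < ellipticDistSq A B η θ t) :
    sinh η * (sin θ ^ (2 * m + 1) * iteratedDeriv m (legendreP n) (cos θ) * sin t ^ (2 * m) *
          ellipticKernelηη A B r η θ t) +
        (2 * m + 1) * cosh η * (sin θ ^ (2 * m + 1) * iteratedDeriv m (legendreP n) (cos θ) *
          sin t ^ (2 * m) * ellipticKernelη A B r η θ t) =
      -sinh η * (sin θ ^ (2 * m) * iteratedDeriv m (legendreP n) (cos θ) * sin t ^ (2 * m) *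
          (sin θ * ellipticKernelθθ A B r η θ t +
            (2 * m + 1) * cos θ * ellipticKernelθ A B r η θ t)) -
        sin θ ^ (2 * m) * iteratedDeriv m (legendreP n) (cos θ) *
          (2 * A * r * (sinh η ^ 2 + sin θ ^ 2)) *
          (sin t ^ (2 * m) * azimuthalDivergence A B r η θ t) := by
  have h2r : 2 * (m : ℝ) + 1 = -2 * r := by
    rw [hr]
    ring
  rw [h2r]
  linear_combination sin θ ^ (2 * m) * iteratedDeriv m (legendreP n) (cos θ) *
    sin t ^ (2 * m) * ellipticKernel_pde (r := r) hpos

lemma weightedIntegral_ellipticKernel_ode (hpos : ∀ η ∈ U, ∀ θ t, 0 < ellipticDistSq A B η θ t)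
    {η r : ℝ} (hη : η ∈ U) (hr : r = -m - 1 / 2) :
    sinh η * weightedIntegral n m (ellipticKernelηη A B r η) +
        (2 * m + 1) * cosh η * weightedIntegral n m (ellipticKernelη A B r η) =
      ((n : ℝ) - m) * (n + m + 1) * sinh η *
        weightedIntegral n m fun θ t => ellipticDistSq A B η θ t ^ r := by
  have hp := continuous_iteratedDeriv_legendreP n m
  have hη₁ := continuous_slice hη (continuousOn_ellipticKernelη r hpos)
  have hη₂ := continuous_slice hη (continuousOn_ellipticKernelηη r hpos)
  have hθ₁ := continuous_slice hη (continuousOn_ellipticKernelθ r hpos)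
  have hθ₂ := continuous_slice hη (continuousOn_ellipticKernelθθ r hpos)
  have hdiv := continuous_slice hη (continuousOn_azimuthalDivergence r hpos)
  have hint : ∀ {F : ℝ × ℝ → ℝ}, Continuous F →
      IntegrableOn F (Set.Icc 0 π ×ˢ Set.Icc 0 (2 * π)) := fun hF =>
    hF.continuousOn.integrableOn_compact (isCompact_Icc.prod isCompact_Icc)
  have hadj := setIntegral_singular_op_eq_weightedIntegral (n := n) (m := m)
    (continuous_slice (k := fun η θ t => ellipticDistSq A B η θ t ^ r) hη
      (continuousOn_ellipticDistSq_rpow r hpos)) hθ₁ hθ₂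
    (fun θ t => hasDerivAt_rpow_comp (hasDerivAt_ellipticDistSq_θ A B η θ t) (hpos η hη θ t))
    (fun θ t => hasDerivAt_rpowDeriv (hasDerivAt_ellipticDistSq_θ A B η θ t)
      (hasDerivAt_ellipticDistSqθ_θ A B η θ t) (hpos η hη θ t))
  have hsplit := fun z : ℝ × ℝ => sin_pow_mul_ellipticKernel_pde (n := n) hr (hpos η hη z.1 z.2)
  rw [weightedIntegral, weightedIntegral, ← integral_const_mul, ← integral_const_mul,
    ← integral_add (hint (by fun_prop)) (hint (by fun_prop)),
    integral_congr_ae (.of_forall hsplit),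
    integral_sub (hint (by fun_prop)) (hint (by fun_prop)), integral_const_mul, hadj,
    setIntegral_azimuthalDivergence (g := fun θ => sin θ ^ (2 * m) *
      iteratedDeriv m (legendreP n) (cos θ) * (2 * A * r * (sinh η ^ 2 + sin θ ^ 2)))
      (by fun_prop) hr (hpos η hη) hdiv]
  ring

lemma legendreP_cosh_ode (n m : ℕ) (η : ℝ) :
    sinh η * (cosh η * iteratedDeriv (m + 1) (legendreP n) (cosh η) +
          sinh η ^ 2 * iteratedDeriv (m + 2) (legendreP n) (cosh η)) +
        (2 * m + 1) * cosh η * (sinh η * iteratedDeriv (m + 1) (legendreP n) (cosh η)) =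
      ((n : ℝ) - m) * (n + m + 1) * sinh η * iteratedDeriv m (legendreP n) (cosh η) := by
  have h := one_sub_sq_mul_iteratedDeriv_legendreP n m (cosh η)
  rw [cosh_sq] at h
  linear_combination -sinh η * h

lemma legendreP_one_mul_weightedIntegral (hU : IsOpen U)
    (hpos : ∀ η ∈ U, ∀ θ t, 0 < ellipticDistSq A B η θ t) {b r : ℝ} (hb : 0 ≤ b)
    (hbU : Set.Icc 0 b ⊆ U) (hr : r = -m - 1 / 2) :
    iteratedDeriv m (legendreP n) 1 *
        weightedIntegral n m (fun θ t => ellipticDistSq A B b θ t ^ r) =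
      weightedIntegral n m (fun θ t => ellipticDistSq A B 0 θ t ^ r) *
        iteratedDeriv m (legendreP n) (cosh b) := by
  have hp : ∀ k η, HasDerivAt (fun η => iteratedDeriv k (legendreP n) (cosh η))
      (sinh η * iteratedDeriv (k + 1) (legendreP n) (cosh η)) η := fun k η =>
    ((hasDerivAt_iteratedDeriv_legendreP n k (cosh η)).comp η (hasDerivAt_cosh η)).congr_deriv
      (mul_comm _ _)
  have hp' : ∀ η, HasDerivAt (fun η => sinh η * iteratedDeriv (m + 1) (legendreP n) (cosh η))
      (cosh η * iteratedDeriv (m + 1) (legendreP n) (cosh η) +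
        sinh η ^ 2 * iteratedDeriv (m + 2) (legendreP n) (cosh η)) η := fun η =>
    ((hasDerivAt_sinh η).mul (hp (m + 1) η)).congr_deriv (by ring)
  have hdamping : ∀ η ∈ Set.Ioo 0 b, -(0 * sinh η) ≤ (2 * m + 1) * cosh η := fun η _ => by
    rw [zero_mul, neg_zero]
    have := cosh_pos η
    positivity
  simpa only [cosh_zero] using singular_ode_solutions_proportional
    (c := fun η => (2 * m + 1) * cosh η) sinh_zero
    (by simp only [cosh_zero, mul_one, ne_eq]; positivity)
    (fun η hη => sinh_pos_iff.2 hη.1) hdamping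
    (fun η hη => hasDerivAt_weightedIntegral hU (hbU hη) (continuousOn_ellipticDistSq_rpow r hpos)
      (continuousOn_ellipticKernelη r hpos) fun η hη θ t =>
        hasDerivAt_rpow_comp (hasDerivAt_ellipticDistSq_η A B η θ t) (hpos η hη θ t))
    (fun η hη => hasDerivAt_weightedIntegral hU (hbU hη) (continuousOn_ellipticKernelη r hpos)
      (continuousOn_ellipticKernelηη r hpos) fun η hη θ t =>
        hasDerivAt_rpowDeriv (hasDerivAt_ellipticDistSq_η A B η θ t)
          (hasDerivAt_ellipticDistSqη_η A B η θ t) (hpos η hη θ t))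
    (fun η hη => weightedIntegral_ellipticKernel_ode hpos (hbU (Set.Ico_subset_Icc_self hη)) hr)
    (fun η _ => hp m η) (fun η _ => hp' η) (fun η _ => legendreP_cosh_ode n m η)
    (Set.right_mem_Icc.2 hb)

end EllipticPotential

section Descent

variable {u : ℝ}

lemma ellipticDistSq_pos (hu : 1 < u) {η : ℝ} (hη : cosh η < u) (ψ θ t : ℝ) :
    0 < ellipticDistSq (√(u ^ 2 - 1) * sin ψ) (u * cos ψ) η θ t := by
  have hsq : √(u ^ 2 - 1) ^ 2 = u ^ 2 - 1 := sq_sqrt (by nlinarith)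
  have hsum : ellipticDistSq (√(u ^ 2 - 1) * sin ψ) (u * cos ψ) η θ t =
      (√(u ^ 2 - 1) * sin ψ - sinh η * sin θ * cos t) ^ 2 + (sinh η * sin θ * sin t) ^ 2 +
        (u * cos ψ - cosh η * cos θ) ^ 2 := by
    rw [ellipticDistSq]
    linear_combination -(sinh η * sin θ) ^ 2 * sin_sq_add_cos_sq t
  refine lt_of_le_of_ne (by rw [hsum]; positivity) fun h₀ => ?_
  rw [hsum] at h₀
  have hradial : √(u ^ 2 - 1) * sin ψ = sinh η * sin θ * cos t := by nlinarith
  have hazimuth : sinh η * sin θ * sin t = 0 := by nlinarith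
  have haxial : u * cos ψ = cosh η * cos θ := by nlinarith
  have hradial_sq : (√(u ^ 2 - 1) * sin ψ) ^ 2 = (sinh η * sin θ) ^ 2 := by
    linear_combination (√(u ^ 2 - 1) * sin ψ + sinh η * sin θ * cos t) * hradial -
      sinh η * sin θ * sin t * hazimuth + (sinh η * sin θ) ^ 2 * sin_sq_add_cos_sq t
  rw [mul_pow, mul_pow, hsq, sin_sq, sin_sq, sinh_sq] at hradial_sq
  have hroots : (u ^ 2 - cosh η ^ 2) * (u ^ 2 - cos θ ^ 2) = 0 := by
    linear_combination u ^ 2 * hradial_sq +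
      (u ^ 2 - 1) * (u * cos ψ + cosh η * cos θ) * haxial
  have hcosh : 0 < u ^ 2 - cosh η ^ 2 := by nlinarith [one_le_cosh η]
  have hcos : 0 < u ^ 2 - cos θ ^ 2 := by nlinarith [cos_sq_le_one θ]
  exact (mul_pos hcosh hcos).ne' hroots

lemma weightedIntegral_ellipticDistSq_zero (hu : 1 < u) (n m : ℕ) (r ψ : ℝ) :
    weightedIntegral n m
        (fun θ t => ellipticDistSq (√(u ^ 2 - 1) * sin ψ) (u * cos ψ) 0 θ t ^ r) =
      focalPotential n m r u ψ * ∫ t in 0..(2 * π), sin t ^ (2 * m) := by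
  have hp := continuous_iteratedDeriv_legendreP n m
  have hX : ∀ θ t, ellipticDistSq (√(u ^ 2 - 1) * sin ψ) (u * cos ψ) 0 θ t =
      focalDistSq u ψ θ := fun θ t => by
    rw [ellipticDistSq_zero, focalDistSq, mul_pow, sq_sqrt (by nlinarith), sin_sq]
    ring
  have hXr : Continuous fun θ => focalDistSq u ψ θ ^ r :=
    Continuous.uncurry_left (f := fun ψ θ => focalDistSq u ψ θ ^ r) ψ
      (continuous_focalDistSq_rpow r hu)
  simp only [weightedIntegral, hX]
  refine (setIntegral_Icc_prod_Icc pi_pos.le two_pi_pos.le (F := fun θ t => sin θ ^ (2 * m + 1) *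
    iteratedDeriv m (legendreP n) (cos θ) * sin t ^ (2 * m) * focalDistSq u ψ θ ^ r)
    (Continuous.continuousOn (Continuous.mul (by fun_prop) (hXr.comp continuous_fst)))).trans ?_
  simp only [mul_right_comm _ (sin _ ^ (2 * m)), intervalIntegral.integral_const_mul,
    intervalIntegral.integral_mul_const, focalPotential]

lemma legendreP_one_sq_mul_weightedIntegral {n m : ℕ} {r : ℝ} (hr : r = -m - 1 / 2) (hu : 1 < u)
    {η ψ : ℝ} (hη₀ : 0 ≤ η) (hη : cosh η < u) (hψ₀ : 0 ≤ ψ) (hψ : ψ < π) :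
    iteratedDeriv m (legendreP n) 1 ^ 2 * weightedIntegral n m
        (fun θ t => ellipticDistSq (√(u ^ 2 - 1) * sin ψ) (u * cos ψ) η θ t ^ r) =
      focalPotential n m r u 0 * (∫ t in 0..(2 * π), sin t ^ (2 * m)) *
        iteratedDeriv m (legendreP n) (cosh η) * iteratedDeriv m (legendreP n) (cos ψ) := by
  have hfocal := legendreP_one_mul_focalPotential n m hr hu hψ₀ hψ
  have hdescent := legendreP_one_mul_weightedIntegral (n := n)
    (isOpen_lt continuous_cosh continuous_const)
    (fun η hη θ t => ellipticDistSq_pos hu hη ψ θ t) hη₀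
    (fun η' hη' => (cosh_le_cosh.2 (abs_le_abs_of_nonneg hη'.1 hη'.2)).trans_lt hη) hr
  rw [weightedIntegral_ellipticDistSq_zero hu] at hdescent
  linear_combination iteratedDeriv m (legendreP n) 1 * hdescent +
    (∫ t in 0..(2 * π), sin t ^ (2 * m)) * iteratedDeriv m (legendreP n) (cosh η) * hfocal

end Descent

section NeumannIntegral

lemma continuousOn_inv_sub_pow {x : ℝ} (hx : 1 < x) (k : ℕ) :
    ContinuousOn (fun t => ((x - t) ^ k)⁻¹) (Set.Icc (-1) 1) :=
  ContinuousOn.inv₀ (by fun_prop) fun t ht => pow_ne_zero _ (by linarith [ht.2])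

lemma hasDerivAt_inv_pow_succ {x : ℝ} (hx : x ≠ 0) (k : ℕ) :
    HasDerivAt (fun x => (x ^ (k + 1))⁻¹) (-(k + 1 : ℝ) * (x ^ (k + 2))⁻¹) x := by
  refine ((hasDerivAt_pow (k + 1) x).fun_inv (pow_ne_zero _ hx)).congr_deriv ?_
  push_cast
  field_simp
  ring

/-- Neumann's integral with the kernel `(x - t)⁻¹` raised to the power `k + 1`. Up to a constant it
is the `k`-th derivative of `legendreQ n` on `(1, ∞)`. -/
def neumannIntegral (n k : ℕ) (x : ℝ) : ℝ :=
  ∫ t in (-1)..1, legendreP n t * ((x - t) ^ (k + 1))⁻¹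

variable (n k m : ℕ) {x : ℝ}

lemma hasDerivAt_neumannIntegral (hx : 1 < x) :
    HasDerivAt (neumannIntegral n k) (-(k + 1 : ℝ) * neumannIntegral n (k + 1) x) x := by
  have hp : Continuous (legendreP n) := by
    simpa using continuous_iteratedDeriv_legendreP n 0
  have hne : ∀ x ∈ Set.Ioi 1, ∀ t ∈ Set.Icc (-1 : ℝ) 1, x - t ≠ 0 := fun x hx t ht => by
    linarith [ht.2, Set.mem_Ioi.1 hx]
  have h := hasDerivAt_intervalIntegral_of_continuousOn (by norm_num : (-1 : ℝ) ≤ 1) isOpen_Ioi hx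
    (F := fun x t => legendreP n t * ((x - t) ^ (k + 1))⁻¹)
    (F' := fun x t => legendreP n t * (-(k + 1 : ℝ) * ((x - t) ^ (k + 2))⁻¹))
    (fun x hx => hp.continuousOn.mul (continuousOn_inv_sub_pow hx _))
    (ContinuousOn.mul (by fun_prop) (.mul (by fun_prop) (.inv₀ (by fun_prop)
      fun z hz => pow_ne_zero _ (hne z.1 hz.1 z.2 hz.2))))
    fun x hx t ht => ((hasDerivAt_inv_pow_succ (hne x hx t ht) k).comp_sub_const x t).const_mul _
  simp only [mul_left_comm _ (-(k + 1 : ℝ)), intervalIntegral.integral_const_mul] at h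
  exact h

lemma iteratedDeriv_legendreQ (hx : 1 < x) :
    iteratedDeriv m (legendreQ n) x = 1 / 2 * (-1) ^ m * m.factorial * neumannIntegral n m x := by
  induction m generalizing x with
  | zero => simp [legendreQ, neumannIntegral, div_eq_mul_inv]
  | succ m ih =>
    have heq : iteratedDeriv m (legendreQ n) =ᶠ[nhds x]
        fun x => 1 / 2 * (-1) ^ m * m.factorial * neumannIntegral n m x := by
      filter_upwards [Ioi_mem_nhds hx] with y hy using ih hy
    rw [iteratedDeriv_succ, heq.deriv_eq, ((hasDerivAt_neumannIntegral n m hx).const_mul _).deriv,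
      Nat.factorial_succ]
    push_cast
    ring

lemma hasDerivAt_iteratedDeriv_legendreQ (hx : 1 < x) :
    HasDerivAt (iteratedDeriv m (legendreQ n)) (iteratedDeriv (m + 1) (legendreQ n) x) x := by
  have heq : iteratedDeriv m (legendreQ n) =ᶠ[nhds x]
      fun x => 1 / 2 * (-1) ^ m * m.factorial * neumannIntegral n m x := by
    filter_upwards [Ioi_mem_nhds hx] with y hy using iteratedDeriv_legendreQ n m hy
  rw [iteratedDeriv_succ]
  exact (((hasDerivAt_neumannIntegral n m hx).const_mul _).differentiableAt.congr_of_eventuallyEq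
    heq).hasDerivAt

lemma integral_one_sub_sq_pow_succ_mul_legendreP_mul {f f' : ℝ → ℝ}
    (hf : ∀ s ∈ Set.Icc (-1) 1, HasDerivAt f (f' s) s) (hf' : ContinuousOn f' (Set.Icc (-1) 1)) :
    ∫ s in (-1)..1, (1 - s ^ 2) ^ (k + 1) * iteratedDeriv (k + 1) (legendreP n) s * f' s =
      ((n : ℝ) - k) * (n + k + 1) *
        ∫ s in (-1)..1, (1 - s ^ 2) ^ k * iteratedDeriv k (legendreP n) s * f s := by
  have hcf : ContinuousOn f (Set.Icc (-1) 1) := fun s hs =>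
    (hf s hs).continuousAt.continuousWithinAt
  have hp := continuous_iteratedDeriv_legendreP n
  have hint : ∀ {g : ℝ → ℝ}, ContinuousOn g (Set.Icc (-1) 1) → IntervalIntegrable g volume (-1) 1 :=
    fun hg => hg.intervalIntegrable_of_Icc (by norm_num)
  have htotal : ∀ s ∈ Set.uIcc (-1) 1, HasDerivAt
      (fun s => (1 - s ^ 2) ^ (k + 1) * iteratedDeriv (k + 1) (legendreP n) s * f s)
      ((1 - s ^ 2) ^ (k + 1) * iteratedDeriv (k + 1) (legendreP n) s * f' s -
        ((n : ℝ) - k) * (n + k + 1) *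
          ((1 - s ^ 2) ^ k * iteratedDeriv k (legendreP n) s * f s)) s := by
    intro s hs
    rw [Set.uIcc_of_le (by norm_num)] at hs
    have hw := (((hasDerivAt_pow 2 s).const_sub 1).fun_pow (k + 1))
    refine ((hw.mul (hasDerivAt_iteratedDeriv_legendreP n (k + 1) s)).mul (hf s hs)).congr_deriv ?_
    simp only [Pi.mul_apply, add_tsub_cancel_right, pow_succ _ k]
    push_cast
    linear_combination (1 - s ^ 2) ^ k * f s * one_sub_sq_mul_iteratedDeriv_legendreP n k s
  have hFTC := intervalIntegral.integral_eq_sub_of_hasDerivAt htotal (hint (by fun_prop))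
  rw [intervalIntegral.integral_sub (hint (by fun_prop)) (hint (by fun_prop)),
    intervalIntegral.integral_const_mul] at hFTC
  simpa [sub_eq_zero] using hFTC

lemma integral_one_sub_sq_pow_mul_legendreP_mul_inv_sub_pow (hx : 1 < x) (hk : k ≤ n) :
    ((m + k).factorial * (n - k).factorial : ℝ) *
        ∫ s in (-1)..1, (1 - s ^ 2) ^ k * iteratedDeriv k (legendreP n) s *
          ((x - s) ^ (m + k + 1))⁻¹ =
      m.factorial * (n + k).factorial * neumannIntegral n m x := by
  induction k with
  | zero => simp [neumannIntegral]
  | succ k ih =>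
    have hd : ∀ s ∈ Set.Icc (-1) 1, HasDerivAt (fun s => ((x - s) ^ (m + k + 1))⁻¹)
        ((m + k + 1 : ℝ) * ((x - s) ^ (m + (k + 1) + 1))⁻¹) s := fun s hs =>
      ((hasDerivAt_inv_pow_succ (by linarith [hs.2]) (m + k)).comp_const_sub x s).congr_deriv
        (by push_cast; ring)
    have hparts := integral_one_sub_sq_pow_succ_mul_legendreP_mul n k hd
      ((continuousOn_inv_sub_pow hx _).const_mul _)
    simp only [mul_left_comm _ (m + k + 1 : ℝ), intervalIntegral.integral_const_mul] at hparts
    have hsub : ((n - k).factorial : ℝ) = (n - k) * (n - (k + 1)).factorial := by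
      rw [← Nat.mul_factorial_pred (by omega), Nat.sub_sub]
      push_cast [Nat.cast_sub (by omega : k ≤ n)]
      ring
    have ih := ih (by omega)
    rw [hsub] at ih
    rw [← add_assoc, ← add_assoc, Nat.factorial_succ, Nat.factorial_succ]
    push_cast
    linear_combination ((m + k).factorial : ℝ) * (n - (k + 1)).factorial * hparts +
      ((n : ℝ) + k + 1) * ih

end NeumannIntegral

section SpheroidalSeparation

lemma intervalIntegral_comp_cos_mul_sin {E : Type*} [NormedAddCommGroup E] [NormedSpace ℝ E]
    {f : ℝ → E} (hf : ContinuousOn f (Set.Icc (-1) 1)) :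
    ∫ θ in 0..π, sin θ • f (cos θ) = ∫ s in (-1)..1, f s := by
  have hrange : cos '' Set.uIcc 0 π ⊆ Set.Icc (-1) 1 := by
    rintro _ ⟨θ, -, rfl⟩
    exact ⟨neg_one_le_cos θ, cos_le_one θ⟩
  have h := intervalIntegral.integral_deriv_smul_comp'' (f := cos) (f' := fun θ => -sin θ)
    (g := f) (by fun_prop) (fun θ _ => (hasDerivAt_cos θ).hasDerivWithinAt) (by fun_prop)
    (hf.mono hrange)
  simp only [cos_zero, cos_pi, Function.comp_apply, neg_smul, intervalIntegral.integral_neg] at h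
  rw [intervalIntegral.integral_symm (-1) 1] at h
  exact neg_inj.1 h

lemma integral_sin_pow_two_mul (m : ℕ) :
    (4 ^ m * m.factorial ^ 2 : ℝ) * ∫ t in 0..(2 * π), sin t ^ (2 * m) =
      2 * π * (2 * m).factorial := by
  induction m with
  | zero => simp
  | succ m ih =>
    rw [mul_add_one 2 m, integral_sin_pow, Nat.factorial_succ, Nat.factorial_succ,
      Nat.factorial_succ]
    simp only [sin_zero, sin_two_pi, ne_eq, Nat.add_eq_zero_iff, one_ne_zero, and_false,
      not_false_eq_true, zero_pow, zero_mul, sub_zero, zero_div, zero_add]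
    push_cast
    field_simp
    linear_combination (4 * (m : ℝ) + 4) * ih

variable {n m : ℕ} {r u : ℝ}

lemma sq_rpow_neg_sub_half {x : ℝ} (hx : 0 ≤ x) (hr : r = -m - 1 / 2) :
    (x ^ 2) ^ r = (x ^ (m + m + 1))⁻¹ := by
  rw [← rpow_natCast, ← rpow_natCast, ← rpow_mul hx, ← rpow_neg hx, hr]
  push_cast
  ring_nf

lemma focalPotential_zero (hr : r = -m - 1 / 2) (hu : 1 < u) :
    focalPotential n m r u 0 = ∫ s in (-1)..1,
      (1 - s ^ 2) ^ m * iteratedDeriv m (legendreP n) s * ((u - s) ^ (m + m + 1))⁻¹ := by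
  have hp := continuous_iteratedDeriv_legendreP n m
  rw [← intervalIntegral_comp_cos_mul_sin
    (f := fun s => (1 - s ^ 2) ^ m * iteratedDeriv m (legendreP n) s * ((u - s) ^ (m + m + 1))⁻¹)
    (ContinuousOn.mul (by fun_prop) (continuousOn_inv_sub_pow hu _)), focalPotential]
  refine intervalIntegral.integral_congr fun θ _ => ?_
  have hdist : focalDistSq u 0 θ = (u - cos θ) ^ 2 := by
    rw [focalDistSq, cos_zero]
    ring
  simp only [hdist, sq_rpow_neg_sub_half (sub_nonneg.2 ((cos_le_one θ).trans hu.le)) hr, ← sin_sq,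
    ← pow_mul, pow_succ _ (2 * m), smul_eq_mul]
  ring

lemma weightedIntegral_ellipticDistSq_rpow (hm : m ≤ n) (hr : r = -m - 1 / 2) (hu : 1 < u)
    {η ψ : ℝ} (hη₀ : 0 ≤ η) (hη : cosh η < u) (hψ₀ : 0 ≤ ψ) (hψ : ψ < π) :
    weightedIntegral n m
        (fun θ t => ellipticDistSq (√(u ^ 2 - 1) * sin ψ) (u * cos ψ) η θ t ^ r) =
      4 * π * (-1) ^ m * ((n - m).factorial / (n + m).factorial) *
        iteratedDeriv m (legendreP n) (cosh η) * iteratedDeriv m (legendreQ n) u *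
        iteratedDeriv m (legendreP n) (cos ψ) := by
  have hseparated := legendreP_one_sq_mul_weightedIntegral (n := n) hr hu hη₀ hη hψ₀ hψ
  have hfocal := integral_one_sub_sq_pow_mul_legendreP_mul_inv_sub_pow n m m hu hm
  have hsin := integral_sin_pow_two_mul m
  have hone := iteratedDeriv_legendreP_one hm
  rw [← focalPotential_zero hr hu, ← two_mul m] at hfocal
  rw [show (4 : ℝ) ^ m = (2 ^ m) ^ 2 by rw [← pow_mul, mul_comm, pow_mul]; norm_num] at hsin
  generalize weightedIntegral n m _ = W at *
  generalize focalPotential n m r u 0 = J at *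
  generalize iteratedDeriv m (legendreP n) 1 = P at *
  have hcleared : ((n + m).factorial : ℝ) ^ 2 * W =
      (n + m).factorial * (2 * π * (n - m).factorial * m.factorial * neumannIntegral n m u *
        iteratedDeriv m (legendreP n) (cosh η) * iteratedDeriv m (legendreP n) (cos ψ)) := by
    linear_combination (2 ^ m * m.factorial * (n - m).factorial : ℝ) ^ 2 * hseparated +
      (n - m).factorial * iteratedDeriv m (legendreP n) (cosh η) *
        iteratedDeriv m (legendreP n) (cos ψ) * ((n - m).factorial * J * hsin + 2 * π * hfocal) -
      W * (2 ^ m * m.factorial * (n - m).factorial * P + (n + m).factorial) * hone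
  have hsign : ((-1 : ℝ) ^ m) ^ 2 = 1 := by rw [← pow_mul, mul_comm, pow_mul]; norm_num
  refine mul_left_cancel₀ (pow_ne_zero 2 (Nat.cast_ne_zero.2 (n + m).factorial_ne_zero))
    (hcleared.trans ?_)
  rw [iteratedDeriv_legendreQ n m hu]
  field_simp
  linear_combination (-4 * neumannIntegral n m u * iteratedDeriv m (legendreP n) (cosh η) *
    iteratedDeriv m (legendreP n) (cos ψ)) * hsign

end SpheroidalSeparation

section JacobiFormula

open Polynomial Polynomial.Chebyshev

variable {f : ℕ → ℝ → ℝ} (hf : ∀ k, ∀ x ∈ Set.Icc (-1) 1, HasDerivAt (f k) (f (k + 1) x) x)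

include hf

lemma continuous_comp_cos_of_hasDerivAt (k : ℕ) : Continuous fun t => f k (cos t) :=
  continuous_iff_continuousAt.2 fun t =>
    (hf k (cos t) (cos_mem_Icc t)).continuousAt.comp continuous_cos.continuousAt

lemma integral_comp_cos_mul_derivative_T_succ (m k : ℕ) :
    ∫ t in 0..(2 * π),
        f (k + 1) (cos t) * sin t ^ (2 * (k + 1)) * (derivative^[k + 1] (T ℝ m)).eval (cos t) =
      ((m : ℝ) ^ 2 - k ^ 2) *
        ∫ t in 0..(2 * π),
          f k (cos t) * sin t ^ (2 * k) * (derivative^[k] (T ℝ m)).eval (cos t) := by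
  have hcont (j : ℕ) : Continuous fun t =>
      f j (cos t) * sin t ^ (2 * j) * (derivative^[j] (T ℝ m)).eval (cos t) :=
    ((continuous_comp_cos_of_hasDerivAt hf j).mul (by fun_prop)).mul
      ((Polynomial.continuous _).comp continuous_cos)
  have hT (j : ℕ) (t : ℝ) : HasDerivAt (fun t => (derivative^[j] (T ℝ m)).eval (cos t))
      ((derivative^[j + 1] (T ℝ m)).eval (cos t) * -sin t) t := by
    rw [Function.iterate_succ_apply']
    exact (Polynomial.hasDerivAt _ _).comp t (hasDerivAt_cos t)
  have hprimitive (t : ℝ) : HasDerivAt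
      (fun t => f k (cos t) * sin t ^ (2 * k + 1) * (derivative^[k + 1] (T ℝ m)).eval (cos t))
      (((m : ℝ) ^ 2 - k ^ 2) *
          (f k (cos t) * sin t ^ (2 * k) * (derivative^[k] (T ℝ m)).eval (cos t)) -
        f (k + 1) (cos t) * sin t ^ (2 * (k + 1)) *
          (derivative^[k + 1] (T ℝ m)).eval (cos t)) t := by
    have hode := one_sub_X_sq_mul_iterate_derivative_T_eval (R := ℝ) m k (cos t)
    rw [← sin_sq] at hode
    push_cast at hode
    refine ((((hf k _ (cos_mem_Icc t)).comp t (hasDerivAt_cos t)).fun_mul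
      ((hasDerivAt_sin t).fun_pow (2 * k + 1))).fun_mul (hT (k + 1) t)).congr_deriv ?_
    simp only [Function.comp_apply, add_tsub_cancel_right, Nat.cast_add, Nat.cast_mul,
      Nat.cast_ofNat, Nat.cast_one]
    linear_combination -f k (cos t) * sin t ^ (2 * k) * hode
  have hftc := intervalIntegral.integral_eq_sub_of_hasDerivAt (a := 0) (b := 2 * π)
    (fun t _ => hprimitive t)
    ((((hcont k).const_mul _).sub (hcont (k + 1))).intervalIntegrable _ _)
  rw [intervalIntegral.integral_sub (((hcont k).const_mul _).intervalIntegrable _ _)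
    ((hcont (k + 1)).intervalIntegrable _ _), intervalIntegral.integral_const_mul] at hftc
  simp only [sin_zero, sin_two_pi, ne_eq, Nat.add_eq_zero_iff, one_ne_zero, and_false,
    not_false_eq_true, zero_pow, mul_zero, zero_mul, sub_zero] at hftc
  exact (sub_eq_zero.1 hftc).symm

lemma integral_comp_cos_mul_derivative_T (m k : ℕ) :
    ∫ t in 0..(2 * π),
        f k (cos t) * sin t ^ (2 * k) * (derivative^[k] (T ℝ m)).eval (cos t) =
      (∏ l ∈ Finset.range k, ((m : ℝ) ^ 2 - l ^ 2)) *
        ∫ t in 0..(2 * π), f 0 (cos t) * cos (m * t) := by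
  induction k with
  | zero => simp [T_real_cos]
  | succ k ih =>
    rw [integral_comp_cos_mul_derivative_T_succ hf, ih, Finset.prod_range_succ]
    ring

theorem integral_comp_cos_mul_cos_nat_mul (m : ℕ) :
    (∏ l ∈ Finset.range m, (2 * (l : ℝ) + 1)) * ∫ t in 0..(2 * π), f 0 (cos t) * cos (m * t) =
      ∫ t in 0..(2 * π), f m (cos t) * sin t ^ (2 * m) := by
  have hconst (x : ℝ) : (derivative^[m] (T ℝ m)).eval x = (derivative^[m] (T ℝ m)).eval 1 := by
    have hdeg : (derivative^[m] (T ℝ m)).natDegree = 0 := by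
      have := natDegree_iterate_derivative (T ℝ m) m
      simpa using this
    rw [eq_C_of_natDegree_eq_zero hdeg, eval_C, eval_C]
  have hint := integral_comp_cos_mul_derivative_T hf m m
  have hone := iterate_derivative_T_eval_one (R := ℝ) m m
  push_cast at hone
  have hne : (∏ l ∈ Finset.range m, ((m : ℝ) ^ 2 - l ^ 2)) ≠ 0 :=
    Finset.prod_ne_zero_iff.2 fun l hl => by
      have hlm : (l : ℝ) < m := Nat.cast_lt.2 (Finset.mem_range.1 hl)
      exact (sub_pos.2 (pow_lt_pow_left₀ hlm l.cast_nonneg two_ne_zero)).ne'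
  simp only [hconst (cos _), intervalIntegral.integral_mul_const] at hint
  refine mul_left_cancel₀ hne ?_
  linear_combination (∏ l ∈ Finset.range m, (2 * (l : ℝ) + 1)) * -hint +
    (∫ t in 0..(2 * π), f m (cos t) * sin t ^ (2 * m)) * hone

omit hf

theorem integral_cos_nat_mul_mul_rpow {α β : ℝ} (hpos : ∀ x ∈ Set.Icc (-1) 1, 0 < α - 2 * β * x)
    (m : ℕ) :
    ∫ t in 0..(2 * π), cos (m * t) * (α - 2 * β * cos t) ^ (-1 / 2 : ℝ) =
      β ^ m * ∫ t in 0..(2 * π), sin t ^ (2 * m) * (α - 2 * β * cos t) ^ (-m - 1 / 2 : ℝ) := by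
  have hderiv (k : ℕ) (x : ℝ) (hx : x ∈ Set.Icc (-1) 1) : HasDerivAt
      (fun x => β ^ k * (∏ l ∈ Finset.range k, (2 * (l : ℝ) + 1)) *
        (α - 2 * β * x) ^ (-k - 1 / 2 : ℝ))
      (β ^ (k + 1) * (∏ l ∈ Finset.range (k + 1), (2 * (l : ℝ) + 1)) *
        (α - 2 * β * x) ^ (-(k + 1 : ℕ) - 1 / 2 : ℝ)) x := by
    have hlinear : HasDerivAt (fun x => α - 2 * β * x) (-(2 * β)) x := by
      simpa using ((hasDerivAt_id x).const_mul (2 * β)).const_sub α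
    refine ((hlinear.rpow_const (Or.inl (hpos x hx).ne')).const_mul _).congr_deriv ?_
    rw [show (-k - 1 / 2 - 1 : ℝ) = -(k + 1 : ℕ) - 1 / 2 by push_cast; ring,
      Finset.prod_range_succ]
    ring
  have hne : (∏ l ∈ Finset.range m, (2 * (l : ℝ) + 1)) ≠ 0 :=
    Finset.prod_ne_zero_iff.2 fun l _ => by positivity
  have h := integral_comp_cos_mul_cos_nat_mul hderiv m
  refine mul_left_cancel₀ hne ?_
  simp only [pow_zero, Finset.range_zero, Finset.prod_empty, one_mul, Nat.cast_zero, neg_zero,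
    zero_sub, mul_assoc, intervalIntegral.integral_const_mul] at h
  simp only [mul_comm (cos _), mul_comm (sin _ ^ _), mul_assoc, neg_div]
  linear_combination h

end JacobiFormula

section AzimuthalFourierCoefficient

lemma integral_comp_sub_mul_exp {H : ℝ → ℂ} (hH : Continuous H)
    (hper : Function.Periodic H (2 * π)) (heven : Function.Even H) (m : ℕ) (φ : ℝ) :
    ∫ t in 0..(2 * π), H (φ - t) * Complex.exp (Complex.I * m * t) =
      Complex.exp (Complex.I * m * φ) * ∫ t in 0..(2 * π), cos (m * t) * H t := by
  let G : ℝ → ℂ := fun t => H t * Complex.exp (-(Complex.I * m * t))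
  have hG : Continuous G := by fun_prop
  have hGper : Function.Periodic G (2 * π) := fun t => by
    have hexp : -(Complex.I * m * ((t + 2 * π : ℝ) : ℂ)) =
        -(Complex.I * m * t) - m * (2 * π * Complex.I) := by
      push_cast
      ring
    simp only [G, hper t, hexp, Complex.exp_periodic.sub_nat_mul_eq m]
  have hreflect (d : ℝ) : ∫ t in 0..(2 * π), G (d - t) = ∫ t in 0..(2 * π), G t := by
    rw [intervalIntegral.integral_comp_sub_left G d, sub_zero]
    simpa using hGper.intervalIntegral_add_eq (d - 2 * π) 0
  have hshift (t : ℝ) : H (φ - t) * Complex.exp (Complex.I * m * t) =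
      Complex.exp (Complex.I * m * φ) * G (φ - t) := by
    rw [mul_left_comm, ← Complex.exp_add]
    push_cast
    ring_nf
  have hcos (t : ℝ) : G t + G (0 - t) = 2 * (cos (m * t) * H t) := by
    have htwo_cos := Complex.two_cos (x := m * t)
    simp only [G, zero_sub, heven t]
    push_cast
    rw [show -(Complex.I * m * (t : ℂ)) = -(m * t) * Complex.I by ring,
      show -(Complex.I * m * -(t : ℂ)) = m * t * Complex.I by ring]
    linear_combination -H t * htwo_cos
  have hfold : 2 * ∫ t in 0..(2 * π), G t = 2 * ∫ t in 0..(2 * π), cos (m * t) * H t := by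
    rw [← intervalIntegral.integral_const_mul _ fun t => cos (m * t) * H t]
    simp only [← hcos]
    rw [intervalIntegral.integral_add (hG.intervalIntegrable _ _)
      (Continuous.intervalIntegrable (by fun_prop) _ _), hreflect, two_mul]
  simp only [hshift, intervalIntegral.integral_const_mul, hreflect]
  rw [mul_left_cancel₀ two_ne_zero hfold]

/-- The integral of the inverse distance against `sin θ ^ (m + 1) * P_n^{(m)} (cos θ)` along the
meridian `t` of the spheroid `η`. -/
def meridianPotential (n m : ℕ) (A B η t : ℝ) : ℝ :=
  ∫ θ in 0..π, sin θ ^ (m + 1) * iteratedDeriv m (legendreP n) (cos θ) *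
    ellipticDistSq A B η θ t ^ (-1 / 2 : ℝ)

lemma continuous_ellipticDistSq_rpow {A B η : ℝ} (hpos : ∀ θ t, 0 < ellipticDistSq A B η θ t)
    (r : ℝ) {Z : Type*} [TopologicalSpace Z] {f g : Z → ℝ} (hf : Continuous f) (hg : Continuous g) :
    Continuous fun z => ellipticDistSq A B η (f z) (g z) ^ r :=
  Continuous.rpow_const (by unfold ellipticDistSq; fun_prop) fun z => Or.inl (hpos (f z) (g z)).ne'

variable {n m : ℕ} {A B η : ℝ}

lemma continuous_meridianPotential (hpos : ∀ θ t, 0 < ellipticDistSq A B η θ t) :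
    Continuous (meridianPotential n m A B η) := by
  have hp := continuous_iteratedDeriv_legendreP n m
  refine intervalIntegral.continuous_parametric_intervalIntegral_of_continuous'
    (f := fun t θ => sin θ ^ (m + 1) * iteratedDeriv m (legendreP n) (cos θ) *
      ellipticDistSq A B η θ t ^ (-1 / 2 : ℝ)) ?_ 0 π
  exact Continuous.mul (by fun_prop)
    (continuous_ellipticDistSq_rpow hpos _ continuous_snd continuous_fst)

lemma periodic_meridianPotential (n m : ℕ) (A B η : ℝ) :
    Function.Periodic (meridianPotential n m A B η) (2 * π) := fun t => by
  simp only [meridianPotential, ellipticDistSq, cos_add_two_pi]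

lemma even_meridianPotential (n m : ℕ) (A B η : ℝ) :
    Function.Even (meridianPotential n m A B η) := fun t => by
  simp only [meridianPotential, ellipticDistSq, cos_neg]

lemma integral_cos_nat_mul_mul_ellipticDistSq_rpow {θ : ℝ}
    (hpos : ∀ t, 0 < ellipticDistSq A B η θ t) (m : ℕ) :
    ∫ t in 0..(2 * π), cos (m * t) * ellipticDistSq A B η θ t ^ (-1 / 2 : ℝ) =
      (A * (sinh η * sin θ)) ^ m *
        ∫ t in 0..(2 * π), sin t ^ (2 * m) * ellipticDistSq A B η θ t ^ (-m - 1 / 2 : ℝ) := by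
  have hpos' : ∀ x ∈ Set.Icc (-1 : ℝ) 1,
      0 < A ^ 2 + B ^ 2 + (sinh η * sin θ) ^ 2 + (cosh η * cos θ) ^ 2 -
        2 * B * (cosh η * cos θ) - 2 * (A * (sinh η * sin θ)) * x := fun x hx => by
    have := hpos (arccos x)
    rwa [ellipticDistSq, cos_arccos hx.1 hx.2, mul_assoc 2 A] at this
  simpa only [ellipticDistSq, mul_assoc 2 A] using integral_cos_nat_mul_mul_rpow hpos' m

lemma integral_cos_nat_mul_mul_meridianPotential
    (hpos : ∀ θ t, 0 < ellipticDistSq A B η θ t) :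
    ∫ t in 0..(2 * π), cos (m * t) * meridianPotential n m A B η t =
      (A * sinh η) ^ m *
        weightedIntegral n m fun θ t => ellipticDistSq A B η θ t ^ (-m - 1 / 2 : ℝ) := by
  have hp := continuous_iteratedDeriv_legendreP n m
  have hX (r : ℝ) : Continuous fun z : ℝ × ℝ => ellipticDistSq A B η z.1 z.2 ^ r :=
    continuous_ellipticDistSq_rpow hpos r continuous_fst continuous_snd
  simp only [meridianPotential, ← intervalIntegral.integral_const_mul]
  rw [← intervalIntegral_swap_of_continuousOn pi_pos.le two_pi_pos.le
    (F := fun θ t => cos (m * t) * (sin θ ^ (m + 1) * iteratedDeriv m (legendreP n) (cos θ) *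
      ellipticDistSq A B η θ t ^ (-1 / 2 : ℝ))), weightedIntegral,
    setIntegral_Icc_prod_Icc pi_pos.le two_pi_pos.le
      (F := fun θ t => sin θ ^ (2 * m + 1) * iteratedDeriv m (legendreP n) (cos θ) *
        sin t ^ (2 * m) * ellipticDistSq A B η θ t ^ (-m - 1 / 2 : ℝ)),
    ← intervalIntegral.integral_const_mul]
  · refine intervalIntegral.integral_congr fun θ _ => ?_
    simp only [mul_left_comm (cos _), mul_assoc _ (sin _ ^ (2 * m)),
      intervalIntegral.integral_const_mul,
      integral_cos_nat_mul_mul_ellipticDistSq_rpow (hpos θ) m]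
    ring
  · exact (Continuous.mul (by fun_prop) (hX _)).continuousOn
  · exact (Continuous.mul (by fun_prop) (Continuous.mul (by fun_prop) (hX _))).continuousOn

lemma sqrt_cosh_sq_sub_one (hη : 0 ≤ η) : √(cosh η ^ 2 - 1) = sinh η := by
  rw [cosh_sq, add_sub_cancel_right, sqrt_sq (sinh_nonneg_iff.2 hη)]

lemma integral_cos_nat_mul_mul_meridianPotential_eq {u ψ : ℝ} (hm : m ≤ n) (hu : 1 < u)
    (hη₀ : 0 ≤ η) (hη : cosh η < u) (hψ₀ : 0 ≤ ψ) (hψ : ψ < π) :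
    ∫ t in 0..(2 * π), cos (m * t) *
        meridianPotential n m (√(u ^ 2 - 1) * sin ψ) (u * cos ψ) η t =
      4 * π * (-1) ^ m * ((n - m).factorial / (n + m).factorial) *
        assocP n m (cosh η) * assocQ n m u * ferrersP n m (cos ψ) := by
  rw [integral_cos_nat_mul_mul_meridianPotential (ellipticDistSq_pos hu hη ψ),
    weightedIntegral_ellipticDistSq_rpow hm rfl hu hη₀ hη hψ₀ hψ, assocP, assocQ, ferrersP,
    sqrt_cosh_sq_sub_one hη₀, ← sin_sq, sqrt_sq (sin_nonneg_of_nonneg_of_le_pi hψ₀ hψ.le)]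
  ring

end AzimuthalFourierCoefficient

section SingleLayerPotential

lemma continuous_prolate (a u : ℝ) : Continuous fun z : ℝ × ℝ => prolate a u z.1 z.2 := by
  exact (PiLp.continuous_toLp 2 _).comp (.matrixVecCons (by fun_prop)
    (.matrixVecCons (by fun_prop) (.matrixVecCons (by fun_prop) continuous_const)))

variable {a u u₀ v φ : ℝ}

lemma norm_prolate_sub_prolate (ha : 0 < a) {η ψ θ : ℝ} (hη : 0 ≤ η) (hψ : 0 ≤ sin ψ)
    (hθ : 0 ≤ sin θ) (t : ℝ) :
    ‖prolate a u (cos ψ) φ - prolate a (cosh η) (cos θ) t‖ =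
      a * √(ellipticDistSq (√(u ^ 2 - 1) * sin ψ) (u * cos ψ) η θ (φ - t)) := by
  rw [EuclideanSpace.norm_eq, Fin.sum_univ_three, ← sqrt_sq ha.le, ← sqrt_mul (sq_nonneg a),
    sqrt_sq ha.le]
  congr 1
  simp only [prolate, sqrt_cosh_sq_sub_one hη, ← sin_sq, sqrt_sq hψ, sqrt_sq hθ, ellipticDistSq,
    cos_sub]
  simp only [WithLp.equiv_symm_apply, PiLp.sub_apply, Matrix.cons_val_zero, norm_eq_abs, sq_abs,
    Matrix.cons_val_one, Matrix.cons_val]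
  linear_combination (a * √(u ^ 2 - 1) * sin ψ) ^ 2 * sin_sq_add_cos_sq φ +
    (a * sinh η * sin θ) ^ 2 * sin_sq_add_cos_sq t

lemma prolate_ne_prolate (ha : 0 < a) (hu₀ : 1 ≤ u₀) (hu : u₀ < u) (hv : v ∈ Set.Icc (-1) 1)
    {s : ℝ} (hs : s ∈ Set.Icc (-1) 1) (t : ℝ) : prolate a u v φ ≠ prolate a u₀ s t := by
  obtain ⟨η, hη, rfl⟩ : ∃ η, 0 ≤ η ∧ cosh η = u₀ :=
    ⟨arcosh u₀, arcosh_nonneg hu₀, cosh_arcosh hu₀⟩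
  obtain ⟨ψ, hψ, rfl⟩ : ∃ ψ, 0 ≤ sin ψ ∧ cos ψ = v :=
    ⟨arccos v, sin_arccos v ▸ sqrt_nonneg _, cos_arccos hv.1 hv.2⟩
  obtain ⟨θ, hθ, rfl⟩ : ∃ θ, 0 ≤ sin θ ∧ cos θ = s :=
    ⟨arccos s, sin_arccos s ▸ sqrt_nonneg _, cos_arccos hs.1 hs.2⟩
  rw [← sub_ne_zero, ← norm_pos_iff, norm_prolate_sub_prolate ha hη hψ hθ]
  exact mul_pos ha (sqrt_pos.2 (ellipticDistSq_pos (hu₀.trans_lt hu) hu ψ θ (φ - t)))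

lemma integral_ferrersP_mul_inv_norm {n m : ℕ} (ha : 0 < a) {η ψ : ℝ} (hη₀ : 0 ≤ η)
    (hη : cosh η < u) (hψ₀ : 0 ≤ ψ) (hψ : ψ ≤ π) (t : ℝ) :
    ∫ s in (-1)..1, ferrersP n m s * ‖prolate a u (cos ψ) φ - prolate a (cosh η) s t‖⁻¹ =
      a⁻¹ * meridianPotential n m (√(u ^ 2 - 1) * sin ψ) (u * cos ψ) η (φ - t) := by
  have hsin {x : ℝ} (h₀ : 0 ≤ x) (h : x ≤ π) : 0 ≤ sin x := sin_nonneg_of_nonneg_of_le_pi h₀ h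
  have hp := continuous_iteratedDeriv_legendreP n m
  have hprolate : Continuous fun s => prolate a (cosh η) s t :=
    Continuous.uncurry_right (f := prolate a (cosh η)) t (continuous_prolate a (cosh η))
  rw [← intervalIntegral_comp_cos_mul_sin
    (f := fun s => ferrersP n m s * ‖prolate a u (cos ψ) φ - prolate a (cosh η) s t‖⁻¹),
    meridianPotential, ← intervalIntegral.integral_const_mul]
  · refine intervalIntegral.integral_congr fun θ hθ => ?_
    rw [Set.uIcc_of_le pi_pos.le] at hθ
    have hpos := ellipticDistSq_pos ((one_le_cosh η).trans_lt hη) hη ψ θ (φ - t)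
    simp only [norm_prolate_sub_prolate ha hη₀ (hsin hψ₀ hψ) (hsin hθ.1 hθ.2), ferrersP, ← sin_sq,
      sqrt_sq (hsin hθ.1 hθ.2), neg_div, rpow_neg hpos.le, ← sqrt_eq_rpow, smul_eq_mul, mul_inv]
    ring
  · refine ContinuousOn.mul (by unfold ferrersP; fun_prop)
      (ContinuousOn.inv₀ (by fun_prop) fun s hs => norm_ne_zero_iff.2 (sub_ne_zero.2 ?_))
    exact prolate_ne_prolate ha (one_le_cosh η) hη (cos_mem_Icc ψ) hs t

/-- The normalising constant `N_n^m` of the spheroidal harmonics. -/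
def sphYNorm (n m : ℕ) : ℝ :=
  √((2 * n + 1) / (4 * π)) * √((n - m).factorial / (n + m).factorial)

lemma sphY_eq_sphYNorm_mul (n m : ℕ) (v φ : ℝ) :
    sphY n m v φ = ((sphYNorm n m * ferrersP n m v : ℝ) : ℂ) * Complex.exp (Complex.I * m * φ) :=
  rfl

lemma areaElemP_div_mul_sphY_div_sqrt (n m : ℕ) {s : ℝ} (hu₀ : 1 < u₀) (hs : s ∈ Set.Icc (-1) 1)
    (r t : ℝ) :
    ((areaElemP a u₀ s / (4 * π * r) : ℝ) : ℂ) * (sphY n m s t / ((√(u₀ ^ 2 - s ^ 2) : ℝ) : ℂ)) =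
      ((a ^ 2 * √(u₀ ^ 2 - 1) / (4 * π) * r⁻¹ : ℝ) : ℂ) * sphY n m s t := by
  have hsqrt : √(u₀ ^ 2 - s ^ 2) ≠ 0 := (sqrt_pos.2 (by nlinarith [hs.1, hs.2])).ne'
  have hsqrt' : ((√(u₀ ^ 2 - s ^ 2) : ℝ) : ℂ) ≠ 0 := Complex.ofReal_ne_zero.2 hsqrt
  rw [areaElemP]
  push_cast
  field_simp

lemma integral_areaElemP_mul_sphY_div_sqrt (n m : ℕ) (ha : 0 < a) {η ψ : ℝ} (hη₀ : 0 < η)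
    (hη : cosh η < u) (hψ₀ : 0 ≤ ψ) (hψ : ψ ≤ π) (t : ℝ) :
    ∫ s in (-1 : ℝ)..1,
      ((areaElemP a (cosh η) s / (4 * π * ‖prolate a u (cos ψ) φ - prolate a (cosh η) s t‖) : ℝ) :
        ℂ) * (sphY n m s t / ((√(cosh η ^ 2 - s ^ 2) : ℝ) : ℂ)) =
      ((a * √(cosh η ^ 2 - 1) / (4 * π) * sphYNorm n m : ℝ) : ℂ) *
        ((meridianPotential n m (√(u ^ 2 - 1) * sin ψ) (u * cos ψ) η (φ - t) : ℂ) *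
          Complex.exp (Complex.I * m * t)) := by
  have hintegral : ∫ s in (-1 : ℝ)..1,
      (ferrersP n m s : ℂ) * (‖prolate a u (cos ψ) φ - prolate a (cosh η) s t‖ : ℂ)⁻¹ =
      ((a⁻¹ * meridianPotential n m (√(u ^ 2 - 1) * sin ψ) (u * cos ψ) η (φ - t) : ℝ) : ℂ) := by
    rw [← integral_ferrersP_mul_inv_norm ha hη₀.le hη hψ₀ hψ]
    simp only [← intervalIntegral.integral_ofReal, Complex.ofReal_mul, Complex.ofReal_inv]
  calc
    _ = ∫ s in (-1 : ℝ)..1, ((a ^ 2 * √(cosh η ^ 2 - 1) / (4 * π) * sphYNorm n m : ℝ) : ℂ) *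
          Complex.exp (Complex.I * m * t) *
          ((ferrersP n m s : ℂ) * (‖prolate a u (cos ψ) φ - prolate a (cosh η) s t‖ : ℂ)⁻¹) := by
      refine intervalIntegral.integral_congr fun s hs => ?_
      rw [Set.uIcc_of_le (by norm_num)] at hs
      refine (areaElemP_div_mul_sphY_div_sqrt n m (one_lt_cosh.2 hη₀.ne') hs _ t).trans ?_
      rw [sphY_eq_sphYNorm_mul]
      push_cast
      ring
    _ = _ := by
      rw [intervalIntegral.integral_const_mul, hintegral]
      push_cast
      field_simp

theorem singleLayerP_prolate {n m : ℕ} (hm : m ≤ n) (ha : 0 < a) (hu₀ : 1 < u₀) (hu : u₀ < u)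
    (hv : v ∈ Set.Ioo (-1) 1) :
    singleLayerP a u₀ (fun s t => sphY n m s t / ((√(u₀ ^ 2 - s ^ 2) : ℝ) : ℂ)) (prolate a u v φ) =
      ((a * √(u₀ ^ 2 - 1) * (-1) ^ m * ((n - m).factorial / (n + m).factorial) *
        assocP n m u₀ * assocQ n m u : ℝ) : ℂ) * sphY n m v φ := by
  obtain ⟨η, hη₀, rfl⟩ : ∃ η, 0 < η ∧ cosh η = u₀ :=
    ⟨arcosh u₀, arcosh_pos hu₀, cosh_arcosh hu₀.le⟩
  obtain ⟨ψ, hψ₀, hψ, rfl⟩ : ∃ ψ, 0 ≤ ψ ∧ ψ < π ∧ cos ψ = v :=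
    ⟨arccos v, arccos_nonneg v, arccos_lt_pi.2 hv.1, cos_arccos hv.1.le hv.2.le⟩
  have hu₁ := hu₀.trans hu
  let H := meridianPotential n m (√(u ^ 2 - 1) * sin ψ) (u * cos ψ) η
  have hazimuth := integral_comp_sub_mul_exp (H := fun t => (H t : ℂ))
    (Complex.continuous_ofReal.comp (continuous_meridianPotential (ellipticDistSq_pos hu₁ hu ψ)))
    (fun t => by simp only [H, periodic_meridianPotential n m _ _ _ t])
    (fun t => by simp only [H, even_meridianPotential n m _ _ _ t]) m φ
  have hcoeff := integral_cos_nat_mul_mul_meridianPotential_eq hm hu₁ hη₀.le hu hψ₀ hψ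
  simp only [← Complex.ofReal_mul, intervalIntegral.integral_ofReal] at hazimuth
  simp only [singleLayerP, integral_areaElemP_mul_sphY_div_sqrt n m ha hη₀ hu hψ₀ hψ.le,
    intervalIntegral.integral_const_mul]
  rw [hazimuth, hcoeff, sphY_eq_sphYNorm_mul]
  push_cast
  field_simp

end SingleLayerPotential

section PotentialDifferentiability

open TopologicalSpace

variable {V E Y : Type*} [NormedAddCommGroup V] [InnerProductSpace ℝ V]
  [NormedAddCommGroup E] [NormedSpace ℝ E]
  [TopologicalSpace Y] [MetrizableSpace Y] [MeasurableSpace Y] [BorelSpace Y]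
  {μ : Measure Y} [IsFiniteMeasureOnCompacts μ] {K : Set Y}

lemma contDiffOn_inv_norm : ContDiffOn ℝ 1 (fun x : V => ‖x‖⁻¹) {0}ᶜ :=
  contDiffOn_id.norm ℝ (fun _ hx => hx) |>.inv fun _ hx => norm_ne_zero_iff.2 hx

lemma differentiableAt_setIntegral_inv_norm_sub_smul [ProperSpace V] (hK : IsCompact K)
    {p : Y → V} (hp : ContinuousOn p K) {w : Y → E} (hw : ContinuousOn w K) {x₀ : V}
    (hx₀ : x₀ ∉ p '' K) :
    DifferentiableAt ℝ (fun x => ∫ y in K, ‖x - p y‖⁻¹ • w y ∂μ) x₀ := by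
  have hU : IsOpen (p '' K)ᶜ := (hK.image_of_continuousOn hp).isClosed.isOpen_compl
  have hsub {x : V} (hx : x ∈ (p '' K)ᶜ) {y : Y} (hy : y ∈ K) : x - p y ≠ 0 :=
    fun h => hx ⟨y, hy, (sub_eq_zero.1 h).symm⟩
  refine (hasFDerivAt_setIntegral_of_isCompact hK hU hx₀
    (F' := fun x y => (fderiv ℝ (fun x : V => ‖x‖⁻¹) (x - p y)).smulRight (w y))
    (fun x hx => ?_) ?_ fun x hx y hy => ?_).differentiableAt
  · exact ((continuousOn_const.sub hp).norm.inv₀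
      fun y hy => norm_ne_zero_iff.2 (hsub hx hy)).smul hw
  · have hp' : ContinuousOn (fun z : V × Y => p z.2) ((p '' K)ᶜ ×ˢ K) :=
      hp.comp continuousOn_snd fun z hz => hz.2
    have hw' : ContinuousOn (fun z : V × Y => w z.2) ((p '' K)ᶜ ×ˢ K) :=
      hw.comp continuousOn_snd fun z hz => hz.2
    have hfderiv := (contDiffOn_inv_norm (V := V)).continuousOn_fderiv_of_isOpen
      isOpen_compl_singleton le_rfl
    exact isBoundedBilinearMap_smulRight.continuous.comp_continuousOn
      ((hfderiv.comp (continuousOn_fst.sub hp') fun z hz => hsub hz.1 hz.2).prodMk hw')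
  · have hdiff := (contDiffOn_inv_norm.differentiableOn one_ne_zero).differentiableAt
      (isOpen_compl_singleton.mem_nhds (hsub hx hy))
    exact (hdiff.hasFDerivAt.comp x (hasFDerivAt_sub_const (p y))).smul_const (w y)

lemma differentiableAt_singleLayerP {a u₀ : ℝ} {σ : ℝ → ℝ → ℂ}
    (hσ : ContinuousOn σ.uncurry (Set.Icc (-1) 1 ×ˢ Set.Icc 0 (2 * π)))
    {x : EuclideanSpace ℝ (Fin 3)}
    (hx : ∀ s ∈ Set.Icc (-1) 1, ∀ t ∈ Set.Icc 0 (2 * π), x ≠ prolate a u₀ s t) :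
    DifferentiableAt ℝ (singleLayerP a u₀ σ) x := by
  let K : Set (ℝ × ℝ) := Set.Icc 0 (2 * π) ×ˢ Set.Icc (-1) 1
  let p : ℝ × ℝ → EuclideanSpace ℝ (Fin 3) := fun z => prolate a u₀ z.2 z.1
  let w : ℝ × ℝ → ℂ := fun z => ((areaElemP a u₀ z.2 / (4 * π) : ℝ) : ℂ) * σ z.2 z.1
  have hK : IsCompact K := isCompact_Icc.prod isCompact_Icc
  have hp : Continuous p := (continuous_prolate a u₀).comp continuous_swap
  have hw : ContinuousOn w K :=
    (Continuous.continuousOn (by unfold areaElemP; fun_prop)).mul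
      (hσ.comp continuous_swap.continuousOn fun z hz => ⟨hz.2, hz.1⟩)
  have hxK {x : EuclideanSpace ℝ (Fin 3)} (hx : x ∈ (p '' K)ᶜ) {z : ℝ × ℝ} (hz : z ∈ K) :
      ‖x - p z‖ ≠ 0 := norm_ne_zero_iff.2 fun h => hx ⟨z, hz, (sub_eq_zero.1 h).symm⟩
  have hx₀ : x ∉ p '' K := by
    rintro ⟨z, hz, rfl⟩
    exact hx z.2 hz.2 z.1 hz.1 rfl
  refine (differentiableAt_setIntegral_inv_norm_sub_smul (μ := volume) hK hp.continuousOn hw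
    hx₀).congr_of_eventuallyEq ?_
  filter_upwards [(hK.image hp).isClosed.isOpen_compl.mem_nhds hx₀] with x hx
  rw [setIntegral_Icc_prod_Icc two_pi_pos.le (by norm_num)
    (F := fun t s => ‖x - p (t, s)‖⁻¹ • w (t, s))
    (((continuous_const.sub hp).norm.continuousOn.inv₀ fun z hz => hxK hx hz).smul hw)]
  simp only [singleLayerP, p, w, Complex.real_smul]
  push_cast
  field_simp

end PotentialDifferentiability

section NormalDerivative

variable {a u u₀ v φ : ℝ} {n m : ℕ}

lemma hasDerivAt_sqrt_sq_sub_one (hu : 1 < u) :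
    HasDerivAt (fun w : ℝ => √(w ^ 2 - 1)) (u / √(u ^ 2 - 1)) u := by
  refine (((hasDerivAt_pow 2 u).sub_const 1).sqrt (by nlinarith)).congr_deriv ?_
  push_cast
  ring

lemma hasDerivAt_prolate (a v φ : ℝ) (hu : 1 < u) :
    HasDerivAt (fun w => prolate a w v φ)
      (!₂[a * (u / √(u ^ 2 - 1)) * √(1 - v ^ 2) * cos φ,
        a * (u / √(u ^ 2 - 1)) * √(1 - v ^ 2) * sin φ, a * v]) u := by
  have hsqrt := hasDerivAt_sqrt_sq_sub_one hu
  have hcoord : HasDerivAt (fun w : ℝ => ![a * √(w ^ 2 - 1) * √(1 - v ^ 2) * cos φ,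
      a * √(w ^ 2 - 1) * √(1 - v ^ 2) * sin φ, a * w * v])
      ![a * (u / √(u ^ 2 - 1)) * √(1 - v ^ 2) * cos φ,
        a * (u / √(u ^ 2 - 1)) * √(1 - v ^ 2) * sin φ, a * v] u := by
    refine hasDerivAt_pi.2 (Fin.forall_fin_succ.2 ⟨?_, Fin.forall_fin_two.2 ⟨?_, ?_⟩⟩)
    · exact ((hsqrt.const_mul a).mul_const _).mul_const _
    · exact ((hsqrt.const_mul a).mul_const _).mul_const _
    · simpa using ((hasDerivAt_id u).const_mul a).mul_const v
  exact (PiLp.continuousLinearEquiv 2 ℝ fun _ : Fin 3 => ℝ).symm.hasFDerivAt.comp_hasDerivAt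
    u hcoord

lemma norm_deriv_prolate (ha : 0 ≤ a) (φ : ℝ) (hu : 1 < u) (hv : v ∈ Set.Icc (-1) 1) :
    ‖deriv (fun w => prolate a w v φ) u‖ = a * √(u ^ 2 - v ^ 2) / √(u ^ 2 - 1) := by
  have hu₁ : 0 < u ^ 2 - 1 := by nlinarith
  have hv₁ : 0 ≤ 1 - v ^ 2 := by nlinarith [hv.1, hv.2]
  have hsum : (a * (u / √(u ^ 2 - 1)) * √(1 - v ^ 2) * cos φ) ^ 2 +
      (a * (u / √(u ^ 2 - 1)) * √(1 - v ^ 2) * sin φ) ^ 2 + (a * v) ^ 2 =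
      a ^ 2 * (u ^ 2 - v ^ 2) / (u ^ 2 - 1) := by
    simp only [mul_pow, div_pow, sq_sqrt hu₁.le, sq_sqrt hv₁, cos_sq' φ]
    field_simp
    ring
  rw [(hasDerivAt_prolate a v φ hu).deriv, EuclideanSpace.norm_eq, Fin.sum_univ_three]
  simp only [norm_eq_abs, sq_abs, Matrix.cons_val_zero, Matrix.cons_val_one, Matrix.cons_val]
  rw [hsum, sqrt_div (by nlinarith [hv.1, hv.2]), sqrt_mul (sq_nonneg a), sqrt_sq ha]

lemma hasDerivAt_assocQ (n m : ℕ) (hu : 1 < u) :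
    HasDerivAt (assocQ n m)
      (m * √(u ^ 2 - 1) ^ (m - 1) * (u / √(u ^ 2 - 1)) * iteratedDeriv m (legendreQ n) u +
        √(u ^ 2 - 1) ^ m * iteratedDeriv (m + 1) (legendreQ n) u) u :=
  ((hasDerivAt_sqrt_sq_sub_one hu).fun_pow m).fun_mul (hasDerivAt_iteratedDeriv_legendreQ n m hu)

lemma continuousAt_deriv_assocQ (n m : ℕ) (hu : 1 < u) : ContinuousAt (deriv (assocQ n m)) u := by
  have hQ (k : ℕ) : ContinuousAt (iteratedDeriv k (legendreQ n)) u :=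
    (hasDerivAt_iteratedDeriv_legendreQ n k hu).continuousAt
  have hsqrt : √(u ^ 2 - 1) ≠ 0 := (sqrt_pos.2 (by nlinarith)).ne'
  have heq : deriv (assocQ n m) =ᶠ[nhds u] fun u =>
      m * √(u ^ 2 - 1) ^ (m - 1) * (u / √(u ^ 2 - 1)) * iteratedDeriv m (legendreQ n) u +
        √(u ^ 2 - 1) ^ m * iteratedDeriv (m + 1) (legendreQ n) u := by
    filter_upwards [Ioi_mem_nhds hu] with w hw using (hasDerivAt_assocQ n m hw).deriv
  exact (continuousAt_congr heq).2 (((by fun_prop (disch := assumption) : ContinuousAt _ u).mul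
    (hQ m)).add ((by fun_prop : ContinuousAt _ u).mul (hQ (m + 1))))

lemma continuousOn_sphY_div_sqrt (n m : ℕ) (hu₀ : 1 < u₀) (T : Set ℝ) :
    ContinuousOn (fun s t => sphY n m s t / ((√(u₀ ^ 2 - s ^ 2) : ℝ) : ℂ)).uncurry
      (Set.Icc (-1) 1 ×ˢ T) := by
  have hp := continuous_iteratedDeriv_legendreP n m
  refine ContinuousOn.div (Continuous.continuousOn (by unfold sphY ferrersP; fun_prop))
    (Continuous.continuousOn (by fun_prop)) fun z hz => Complex.ofReal_ne_zero.2 ?_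
  exact (sqrt_pos.2 (by nlinarith [hz.1.1, hz.1.2])).ne'

lemma fderiv_singleLayerP_deriv_prolate (hm : m ≤ n) (ha : 0 < a) (hu₀ : 1 < u₀) (hu : u₀ < u)
    (hv : v ∈ Set.Ioo (-1) 1) :
    fderiv ℝ (singleLayerP a u₀ fun s t => sphY n m s t / ((√(u₀ ^ 2 - s ^ 2) : ℝ) : ℂ))
        (prolate a u v φ) (deriv (fun w => prolate a w v φ) u) =
      ((a * √(u₀ ^ 2 - 1) * (-1) ^ m * ((n - m).factorial / (n + m).factorial) *
        assocP n m u₀ * deriv (assocQ n m) u : ℝ) : ℂ) * sphY n m v φ := by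
  have hu₁ := hu₀.trans hu
  have hS := (differentiableAt_singleLayerP (continuousOn_sphY_div_sqrt n m hu₀ _)
    fun s hs t _ => prolate_ne_prolate (φ := φ) ha hu₀.le hu (Set.Ioo_subset_Icc_self hv) hs
      t).hasFDerivAt
  have hΦ := (hasDerivAt_prolate a v φ hu₁).differentiableAt.hasDerivAt
  have hQ := (hasDerivAt_assocQ n m hu₁).differentiableAt.hasDerivAt
  refine (hS.comp_hasDerivAt (f := fun w => prolate a w v φ) u hΦ).unique
    (((hQ.const_mul _).ofReal_comp.mul_const _).congr_of_eventuallyEq ?_)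
  filter_upwards [Ioi_mem_nhds hu] with w hw using singleLayerP_prolate hm ha hu₀ hw hv

lemma tendsto_inv_norm_deriv_prolate (ha : 0 < a) (φ : ℝ) (hu₀ : 1 < u₀)
    (hv : v ∈ Set.Icc (-1) 1) :
    Filter.Tendsto (fun u => ‖deriv (fun w => prolate a w v φ) u‖⁻¹) (nhds u₀)
      (nhds (√(u₀ ^ 2 - 1) / (a * √(u₀ ^ 2 - v ^ 2)))) := by
  have hsqrt : a * √(u₀ ^ 2 - v ^ 2) ≠ 0 :=
    (mul_pos ha (sqrt_pos.2 (by nlinarith [hv.1, hv.2]))).ne'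
  refine Filter.Tendsto.congr' (f₁ := fun u => √(u ^ 2 - 1) / (a * √(u ^ 2 - v ^ 2))) ?_
    (ContinuousAt.div (by fun_prop) (by fun_prop) hsqrt)
  filter_upwards [Ioi_mem_nhds hu₀] with u hu
  rw [norm_deriv_prolate ha.le φ hu hv, inv_div]

end NormalDerivative

theorem singleLayer_normal_derivative_exterior_limit (a : ℝ) (ha : 0 < a) (u₀ : ℝ)
    (hu₀ : 1 < u₀) (n m : ℕ) (hm : m ≤ n) (v φ : ℝ) (hv : v ∈ Set.Ioo (-1 : ℝ) 1) :
    Filter.Tendsto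
      (fun u : ℝ =>
        fderiv ℝ
          (singleLayerP a u₀ (fun s t => sphY n m s t / ((Real.sqrt (u₀ ^ 2 - s ^ 2) : ℝ) : ℂ)))
          (prolate a u v φ)
          (‖deriv (fun w => prolate a w v φ) u‖⁻¹ • deriv (fun w => prolate a w v φ) u))
      (nhdsWithin u₀ (Set.Ioi u₀))
      (nhds (((((n - m).factorial : ℝ) / ((n + m).factorial : ℝ)) * (-1 : ℝ) ^ m *
          (u₀ ^ 2 - 1) * assocP n m u₀ * deriv (assocQ n m) u₀ /
            Real.sqrt (u₀ ^ 2 - v ^ 2) : ℝ) * sphY n m v φ)) := by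
  have hnorm := (tendsto_inv_norm_deriv_prolate ha φ hu₀ (Set.Ioo_subset_Icc_self hv)).mono_left
    (nhdsWithin_le_nhds (s := Set.Ioi u₀))
  have hderiv := (continuousAt_deriv_assocQ n m hu₀).tendsto.mono_left
    (nhdsWithin_le_nhds (s := Set.Ioi u₀))
  have hlimit := hnorm.smul (((Complex.continuous_ofReal.tendsto _).comp (hderiv.const_mul
    (a * √(u₀ ^ 2 - 1) * (-1) ^ m * ((n - m).factorial / (n + m).factorial) *
      assocP n m u₀))).mul_const (sphY n m v φ))
  convert hlimit.congr' ?_ using 2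
  · rw [Complex.real_smul, ← mul_assoc, ← Complex.ofReal_mul]
    congr 2
    field_simp
    rw [sq_sqrt (by nlinarith)]
    ring
  · filter_upwards [self_mem_nhdsWithin] with u hu
    rw [map_smul, fderiv_singleLayerP_deriv_prolate hm ha hu₀ hu hv, Function.comp_apply]
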